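/- arXiv:1709.00210 — 2 statements merged into one kernel-verified Lean document; each statement's English description precedes it below -/
import Mathlib

section
/- Let 0 < α < 1, let A be a real s×s matrix all of whose (complex) eigenvalues λ satisfy λ ≠ 0 and |arg λ| > απ/2, let Q : [0,∞) → ℝ^{s×s} be continuous with lim_{t→∞} ‖Q(t)‖ = 0, and let g : [0,∞) → ℝ^s be continuous with sup_{t≥0} t^{1-α} ∫₀^t (t-τ)^{α-1} ‖E_{α,α}((t-τ)^α A) g(τ)‖ dτ < ∞. Then for every x₀ ∈ ℝ^s there is a unique φ ∈ C⁰_{1-α}([0,∞), ℝ^s) satisfying φ(t) = t^{α-1} E_{α,α}(t^α A) x₀ + ∫₀^t (t-τ)^{α-1} E_{α,α}((t-τ)^α A) Q(τ) φ(τ) dτ + ∫₀^t (t-τ)^{α-1} E_{α,α}((t-τ)^α A) g(τ) dτ for all t > 0; in particular lim_{t→∞} φ(t) = 0. -/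
open Filter Topology MeasureTheory

attribute [local instance] Matrix.linftyOpNormedAddCommGroup Matrix.linftyOpNormedRing

/-- The matrix Mittag-Leffler function `E_{α,β}(B) = ∑ Bᵏ / Γ(αk + β)`. -/
noncomputable def ML {s : ℕ} (α β : ℝ) (B : Matrix (Fin s) (Fin s) ℝ) :
    Matrix (Fin s) (Fin s) ℝ :=
  ∑' k : ℕ, (Real.Gamma (α * k + β))⁻¹ • B ^ k

/-- Membership in `C⁰_{1-α}([0,∞), ℝ^s)`: continuous on `(0,∞)`, the limit
`lim_{t→0⁺} t^{1-α} x(t)` exists, and `sup_{t≥0} t^{1-α} ‖x(t)‖ < ∞`. -/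
def memC0inf (α : ℝ) {s : ℕ} (x : ℝ → (Fin s → ℝ)) : Prop :=
  ContinuousOn x (Set.Ioi 0) ∧
  (∃ l : Fin s → ℝ, Tendsto (fun t : ℝ => t ^ (1 - α) • x t) (𝓝[>] 0) (𝓝 l)) ∧
  (∃ C : ℝ, ∀ t : ℝ, 0 ≤ t → t ^ (1 - α) * ‖x t‖ ≤ C)


theorem integrableOn_rpow_exp (s b : ℝ) (hs : -1 < s) (hb : 0 < b) :
    IntegrableOn (fun t : ℝ => t ^ s * Real.exp (-(b * t))) (Set.Ioi 0) := by
  have := integrableOn_rpow_mul_exp_neg_mul_rpow (p := 1) hs one_pos hb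
  simpa [neg_mul] using this

theorem norm_cexp_neg_mul (z : ℂ) (t : ℝ) : ‖Complex.exp (-(z * t))‖ = Real.exp (-(z.re * t)) := by
  rw [Complex.norm_exp]; simp

theorem aesm_rpow_exp (s : ℝ) (z : ℂ) :
    AEStronglyMeasurable (fun t : ℝ => ((t ^ s : ℝ) : ℂ) * Complex.exp (-(z * t)))
      (volume.restrict (Set.Ioi 0)) := by
  apply Measurable.aestronglyMeasurable
  fun_prop

theorem integrableOn_rpow_cexp (s : ℝ) (z : ℂ) (hs : -1 < s) (hb : 0 < z.re) :
    IntegrableOn (fun t : ℝ => ((t ^ s : ℝ) : ℂ) * Complex.exp (-(z * t))) (Set.Ioi 0) := by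
  refine Integrable.mono' (integrableOn_rpow_exp s z.re hs hb) (aesm_rpow_exp s z) ?_
  filter_upwards [ae_restrict_mem measurableSet_Ioi] with t ht
  have ht' : (0:ℝ) < t := ht
  rw [norm_mul, norm_cexp_neg_mul, Complex.norm_real, Real.norm_of_nonneg (by positivity)]

theorem gamma_complex_hasDeriv (β : ℝ) (hβ : 0 < β) (z : ℂ) (hz : 0 < z.re) :
    DifferentiableAt ℂ (fun z : ℂ => ∫ t in Set.Ioi (0:ℝ),
      ((t ^ (β - 1) : ℝ) : ℂ) * Complex.exp (-(z * t))) z := by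
  have hs : {w : ℂ | z.re / 2 < w.re} ∈ 𝓝 z :=
    (isOpen_lt continuous_const Complex.continuous_re).mem_nhds (by simp; linarith)
  refine (hasDerivAt_integral_of_dominated_loc_of_deriv_le (𝕜 := ℂ)
    (F' := fun z t => ((t ^ (β - 1) : ℝ) : ℂ) * (Complex.exp (-(z * t)) * (-t)))
    (bound := fun t => t ^ β * Real.exp (-(z.re / 2 * t))) hs
    (Eventually.of_forall fun w => aesm_rpow_exp _ w)
    (integrableOn_rpow_cexp _ _ (by linarith) hz) ?_ ?_
    (integrableOn_rpow_exp β (z.re/2) (by linarith) (by linarith)) ?_).2.differentiableAt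
  · apply Measurable.aestronglyMeasurable
    fun_prop
  · filter_upwards [ae_restrict_mem measurableSet_Ioi] with t ht w hw
    have ht' : (0:ℝ) < t := ht
    have hw' : z.re / 2 < w.re := hw
    rw [norm_mul, norm_mul, norm_cexp_neg_mul, Complex.norm_real, norm_neg, Complex.norm_real,
      Real.norm_of_nonneg (by positivity), Real.norm_of_nonneg ht'.le]
    have h1 : t ^ β = t ^ (β - 1) * t := by
      rw [Real.rpow_sub_one ht'.ne']; field_simp
    rw [h1]
    have : Real.exp (-(w.re * t)) ≤ Real.exp (-(z.re / 2 * t)) := by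
      apply Real.exp_le_exp.2
      nlinarith
    nlinarith [mul_le_mul_of_nonneg_left this (by positivity : 0 ≤ t ^ (β - 1) * t)]
  · refine Eventually.of_forall fun t w _ => ?_
    apply HasDerivAt.const_mul
    have : HasDerivAt (fun w : ℂ => -(w * t)) (-(t:ℂ)) w := by
      have h := ((hasDerivAt_id w).mul_const (t:ℂ)).neg
      rw [one_mul] at h
      exact h
    exact this.cexp

theorem gamma_complex (β : ℝ) (hβ : 0 < β) (z : ℂ) (hz : 0 < z.re) :
    ∫ t in Set.Ioi (0:ℝ), ((t ^ (β - 1) : ℝ) : ℂ) * Complex.exp (-(z * t))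
      = z ^ (-(β:ℂ)) * (Real.Gamma β : ℂ) := by
  have hU : IsOpen {w : ℂ | 0 < w.re} := isOpen_lt continuous_const Complex.continuous_re
  have hconn : IsPreconnected {w : ℂ | 0 < w.re} := (convex_halfSpace_re_gt 0).isPreconnected
  have h1 : AnalyticOnNhd ℂ (fun z : ℂ => ∫ t in Set.Ioi (0:ℝ),
      ((t ^ (β - 1) : ℝ) : ℂ) * Complex.exp (-(z * t))) {w : ℂ | 0 < w.re} := by
    apply DifferentiableOn.analyticOnNhd _ hU
    intro w hw
    exact (gamma_complex_hasDeriv β hβ w hw).differentiableWithinAt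
  have h2 : AnalyticOnNhd ℂ (fun z : ℂ => z ^ (-(β:ℂ)) * (Real.Gamma β : ℂ)) {w : ℂ | 0 < w.re} := by
    apply DifferentiableOn.analyticOnNhd _ hU
    intro w hw
    have : w ∈ Complex.slitPlane := Or.inl hw
    exact (((hasDerivAt_id w).cpow_const (c := -(β:ℂ)) this).mul_const _).differentiableAt.differentiableWithinAt
  refine h1.eqOn_of_preconnected_of_frequently_eq h2 hconn (z₀ := 1) (by simp) ?_ hz
  have key : ∀ x : ℝ, 0 < x → (∫ t in Set.Ioi (0:ℝ),
      ((t ^ (β - 1) : ℝ) : ℂ) * Complex.exp (-((x:ℂ) * t))) = (x:ℂ) ^ (-(β:ℂ)) * (Real.Gamma β : ℂ) := by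
    intro x hx
    have := Real.integral_rpow_mul_exp_neg_mul_Ioi hβ hx
    have h3 : (((∫ t in Set.Ioi (0:ℝ), t ^ (β - 1) * Real.exp (-(x * t))) : ℝ) : ℂ)
        = (((1 / x) ^ β * Real.Gamma β : ℝ) : ℂ) := by rw [this]
    rw [← integral_complex_ofReal] at h3
    push_cast at h3 ⊢
    rw [h3, ← Complex.ofReal_neg, ← Complex.ofReal_cpow hx.le, Real.rpow_neg hx.le, one_div,
      Real.inv_rpow hx.le]
  have ht : Tendsto (fun x : ℝ => (x:ℂ)) (𝓝[≠] 1) (𝓝[≠] 1) := by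
    apply tendsto_nhdsWithin_of_tendsto_nhds_of_eventually_within
    · exact (Complex.continuous_ofReal.tendsto' 1 1 (by simp)).mono_left nhdsWithin_le_nhds
    · filter_upwards [self_mem_nhdsWithin] with x hx
      simpa using hx
  apply ht.frequently
  apply Eventually.frequently
  have : ∀ᶠ x : ℝ in 𝓝[≠] 1, 0 < x := nhdsWithin_le_nhds (lt_mem_nhds one_pos)
  filter_upwards [this] with x hx
  exact key x hx


theorem gamma_lower (M x : ℝ) (hM : 0 < M) (hx : 1 ≤ x) :
    M ^ (x - 1) * Real.exp (-M) ≤ Real.Gamma x := by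
  rw [Real.Gamma_eq_integral (by linarith)]
  have hint := Real.GammaIntegral_convergent (s := x) (by linarith)
  have hexp : IntegrableOn (fun y : ℝ => Real.exp (-y)) (Set.Ioi M) := integrableOn_exp_neg_Ioi M
  calc M ^ (x - 1) * Real.exp (-M) = ∫ y in Set.Ioi M, Real.exp (-y) * M ^ (x - 1) := by
        rw [integral_mul_const, integral_exp_neg_Ioi]; ring
    _ ≤ ∫ y in Set.Ioi M, Real.exp (-y) * y ^ (x - 1) := by
        apply setIntegral_mono_on (hexp.mul_const _)
          (hint.mono_set (Set.Ioi_subset_Ioi hM.le)) measurableSet_Ioi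
        intro y hy
        have : M ≤ y := le_of_lt hy
        gcongr
    _ ≤ _ := by
        apply setIntegral_mono_set hint
        · filter_upwards [ae_restrict_mem measurableSet_Ioi] with y hy
          have : (0:ℝ) < y := hy
          positivity
        · exact (Set.Ioi_subset_Ioi hM.le).eventuallyLE

theorem summable_ml (α : ℝ) (hα : 0 < α) (R : ℝ) (hR : 0 ≤ R) :
    Summable (fun k : ℕ => (Real.Gamma (α * k + α))⁻¹ * R ^ k) := by
  set M : ℝ := (2 * R + 1) ^ (α⁻¹) with hMdef
  have hM : 0 < M := by positivity
  have hMα : M ^ α = 2 * R + 1 := by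
    rw [hMdef, ← Real.rpow_mul (by positivity), inv_mul_cancel₀ hα.ne', Real.rpow_one]
  have hlt : R / (2 * R + 1) < 1 := by
    rw [div_lt_one (by positivity)]; linarith
  refine Summable.of_norm_bounded_eventually_nat (g := fun k : ℕ =>
    (M ^ (1 - α) * Real.exp M) * (R / (2 * R + 1)) ^ k)
    ((summable_geometric_of_lt_one (by positivity) hlt).mul_left _) ?_
  have : ∀ᶠ k : ℕ in atTop, 1 ≤ α * k + α := by
    have ht : Tendsto (fun k : ℕ => α * (k:ℝ) + α) atTop atTop :=
      tendsto_atTop_add_const_right _ _ (tendsto_natCast_atTop_atTop.const_mul_atTop hα)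
    exact ht.eventually_ge_atTop 1
  filter_upwards [this] with k hk
  have hg := gamma_lower M _ hM hk
  have hpos : 0 < M ^ (α * k + α - 1) * Real.exp (-M) := by positivity
  have hgp : 0 < Real.Gamma (α * k + α) := lt_of_lt_of_le hpos hg
  rw [Real.norm_of_nonneg (by positivity)]
  have h1 : (Real.Gamma (α * k + α))⁻¹ ≤ (M ^ (α * k + α - 1) * Real.exp (-M))⁻¹ := by
    gcongr
  have h2 : (M ^ (α * k + α - 1) * Real.exp (-M))⁻¹ =
      (M ^ (1 - α) * Real.exp M) * ((2 * R + 1) ^ k)⁻¹ := by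
    rw [← hMα, ← Real.rpow_natCast, ← Real.rpow_mul hM.le, mul_inv, ← Real.rpow_neg hM.le,
      Real.exp_neg, inv_inv, ← Real.rpow_neg hM.le, mul_right_comm, ← Real.rpow_add hM]
    ring_nf
  calc _ ≤ (M ^ (α * k + α - 1) * Real.exp (-M))⁻¹ * R ^ k := by gcongr
    _ = _ := by rw [h2, div_pow]; ring

theorem norm_pow_le_max {𝔸 : Type*} [NormedRing 𝔸] (a : 𝔸) (k : ℕ) :
    ‖a ^ k‖ ≤ max 1 ‖(1:𝔸)‖ * ‖a‖ ^ k := by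
  rcases Nat.eq_zero_or_pos k with rfl | hk
  · simp
  · calc ‖a ^ k‖ ≤ ‖a‖ ^ k := norm_pow_le' a hk
      _ ≤ _ := le_mul_of_one_le_left (by positivity) (le_max_left _ _)

theorem summable_powser {𝕜 𝔸 : Type*} [NormedField 𝕜] [NormedRing 𝔸] [NormedAlgebra 𝕜 𝔸]
    [CompleteSpace 𝔸] (c : ℕ → 𝕜) (hc : ∀ R : ℝ, 0 ≤ R → Summable fun k => ‖c k‖ * R ^ k) (a : 𝔸) :
    Summable (fun k => ‖c k • a ^ k‖) := by
  refine Summable.of_nonneg_of_le (fun _ => norm_nonneg _) (fun k => ?_)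
    ((hc ‖a‖ (norm_nonneg _)).mul_left (max 1 ‖(1:𝔸)‖))
  rw [norm_smul]
  calc _ ≤ ‖c k‖ * (max 1 ‖(1:𝔸)‖ * ‖a‖ ^ k) := by gcongr; exact norm_pow_le_max a k
    _ = _ := by ring

theorem continuous_powser {𝕜 𝔸 : Type*} [NormedField 𝕜] [NormedRing 𝔸] [NormedAlgebra 𝕜 𝔸]
    [CompleteSpace 𝔸] (c : ℕ → 𝕜) (hc : ∀ R : ℝ, 0 ≤ R → Summable fun k => ‖c k‖ * R ^ k) :
    Continuous (fun a : 𝔸 => ∑' k, c k • a ^ k) := by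
  rw [continuous_iff_continuousAt]
  intro a₀
  have hU : Metric.ball (0:𝔸) (‖a₀‖ + 1) ∈ 𝓝 a₀ := Metric.isOpen_ball.mem_nhds (by simp)
  refine ContinuousOn.continuousAt ?_ hU
  refine continuousOn_tsum (u := fun k => max 1 ‖(1:𝔸)‖ * (‖c k‖ * (‖a₀‖ + 1) ^ k))
    (fun k => by fun_prop) ((hc _ (by positivity)).mul_left _) ?_
  intro k a ha
  have ha' : ‖a‖ ≤ ‖a₀‖ + 1 := by simpa using (le_of_lt (mem_ball_zero_iff.1 ha))
  rw [norm_smul]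
  calc _ ≤ ‖c k‖ * (max 1 ‖(1:𝔸)‖ * ‖a‖ ^ k) := by gcongr; exact norm_pow_le_max a k
    _ ≤ ‖c k‖ * (max 1 ‖(1:𝔸)‖ * (‖a₀‖ + 1) ^ k) := by gcongr
    _ = _ := by ring


section A3
variable {𝔸 : Type*} [NormedRing 𝔸] [NormedAlgebra ℂ 𝔸] [CompleteSpace 𝔸]

theorem resolvent_sector_bound (α : ℝ) (hα0 : 0 < α) (hα1 : α < 1) (a : 𝔸)
    (hspec : ∀ μ ∈ spectrum ℂ a, μ ≠ 0 ∧ α * Real.pi / 2 < |Complex.arg μ|) :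
    ∃ C : ℝ, 0 ≤ C ∧ ∀ z : ℂ, 0 < z.re → z ^ (α:ℂ) ∈ resolventSet ℂ a ∧
      ‖resolvent a (z ^ (α:ℂ))‖ ≤ C ∧ ‖z‖ ^ α * ‖resolvent a (z ^ (α:ℂ))‖ ≤ C := by
  have hpi := Real.pi_pos
  -- polar parametrization
  let P : ℝ × ℝ → ℂ := fun p => (p.1 : ℂ) * Complex.exp (p.2 * Complex.I)
  have hPc : Continuous P := by fun_prop
  have hres : ∀ ρ θ : ℝ, 0 ≤ ρ → |θ| ≤ α * Real.pi / 2 → P (ρ, θ) ∈ resolventSet ℂ a := by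
    intro ρ θ hρ hθ
    by_contra hcon
    obtain ⟨h0, h1⟩ := hspec (P (ρ, θ)) hcon
    have hρ' : 0 < ρ := by
      rcases hρ.eq_or_lt with h | h
      · exfalso; apply h0; simp [P, ← h]
      · exact h
    have hθ2 := abs_le.1 hθ
    have : Complex.arg (P (ρ, θ)) = θ := by
      simp only [P]
      rw [Complex.exp_mul_I]
      exact Complex.arg_mul_cos_add_sin_mul_I hρ' ⟨by nlinarith, by nlinarith⟩
    rw [this] at h1
    linarith
  have hcpow : ∀ z : ℂ, 0 < z.re → ∃ θ : ℝ, |θ| ≤ α * Real.pi / 2 ∧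
      z ^ (α:ℂ) = P (‖z‖ ^ α, θ) := by
    intro z hz
    have hz0 : z ≠ 0 := by rintro rfl; simp at hz
    refine ⟨α * z.arg, ?_, ?_⟩
    · rw [abs_mul, abs_of_pos hα0]
      have := Complex.abs_arg_le_pi_div_two_iff.2 hz.le
      nlinarith
    · simp only [P]
      rw [Complex.cpow_def_of_ne_zero hz0, Complex.log, add_mul, Complex.exp_add]
      congr 1
      · rw [Real.rpow_def_of_pos (norm_pos_iff.2 hz0)]
        push_cast; rfl
      · push_cast; ring_nf
  -- boundedness
  have hcob := spectrum.resolvent_tendsto_cobounded (𝕜 := ℂ) a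
  have hev : ∀ᶠ z in Bornology.cobounded ℂ, ‖resolvent a z‖ < 1 := by
    have := hcob.norm
    rw [norm_zero] at this
    exact this.eventually (gt_mem_nhds one_pos)
  rw [← comap_norm_atTop] at hev
  obtain ⟨R, hR⟩ := (Filter.eventually_atTop.1 (Filter.eventually_comap.1 hev))
  have hK : IsCompact (Set.Icc (0:ℝ) R ×ˢ Set.Icc (-(α * Real.pi / 2)) (α * Real.pi / 2)) :=
    isCompact_Icc.prod isCompact_Icc
  have hcont : ContinuousOn (fun p : ℝ × ℝ => resolvent a (P p))
      (Set.Icc (0:ℝ) R ×ˢ Set.Icc (-(α * Real.pi / 2)) (α * Real.pi / 2)) := by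
    rintro ⟨ρ, θ⟩ ⟨hρ, hθ⟩
    have := (spectrum.hasDerivAt_resolvent_const_left (hres ρ θ hρ.1 (abs_le.2 hθ))).continuousAt
    exact (ContinuousAt.comp (f := P) this hPc.continuousAt).continuousWithinAt
  obtain ⟨C, hC⟩ := hK.exists_bound_of_continuousOn hcont
  have hb : ∀ z : ℂ, 0 < z.re → ‖resolvent a (z ^ (α:ℂ))‖ ≤ max C 1 := by
    intro z hz
    obtain ⟨θ, hθ, he⟩ := hcpow z hz
    rcases le_total (‖z‖ ^ α) R with h | h
    · rw [he]
      exact (hC (‖z‖ ^ α, θ) ⟨⟨by positivity, h⟩, abs_le.1 hθ⟩).trans (le_max_left _ _)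
    · refine (hR (‖z‖ ^ α) h (z ^ (α:ℂ)) ?_).le.trans (le_max_right _ _)
      rw [Complex.norm_cpow_real]
  refine ⟨max C 1 + (‖(1:𝔸)‖ + ‖a‖ * max C 1), by positivity, fun z hz => ?_⟩
  obtain ⟨θ, hθ, he⟩ := hcpow z hz
  have hmem : z ^ (α:ℂ) ∈ resolventSet ℂ a := by
    rw [he]; exact hres _ _ (by positivity) hθ
  have hbz := hb z hz
  have hpos : 0 ≤ max C 1 := by positivity
  refine ⟨hmem, by nlinarith [norm_nonneg (1:𝔸), norm_nonneg a], ?_⟩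
  have hid : (z ^ (α:ℂ)) • resolvent a (z ^ (α:ℂ)) = 1 + a * resolvent a (z ^ (α:ℂ)) := by
    have := Ring.mul_inverse_cancel _ hmem
    rw [sub_mul, Algebra.algebraMap_eq_smul_one, smul_mul_assoc, one_mul, ← Algebra.algebraMap_eq_smul_one] at this
    rw [resolvent, ← this]; abel
  have hn := congrArg norm hid
  rw [norm_smul, Complex.norm_cpow_real] at hn
  rw [hn]
  calc _ ≤ ‖(1:𝔸)‖ + ‖a * resolvent a (z ^ (α:ℂ))‖ := norm_add_le _ _
    _ ≤ ‖(1:𝔸)‖ + ‖a‖ * ‖resolvent a (z ^ (α:ℂ))‖ := by gcongr; exact norm_mul_le _ _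
    _ ≤ ‖(1:𝔸)‖ + ‖a‖ * max C 1 := by gcongr
    _ ≤ _ := by linarith

noncomputable def HH (α : ℝ) (a : 𝔸) (z : ℂ) : 𝔸 :=
  ((α * (1 - α) : ℂ) * z ^ (α - 2 : ℂ)) • resolvent a (z ^ (α:ℂ)) ^ 2 +
  ((2 * α ^ 2 : ℂ) * z ^ (2 * α - 2 : ℂ)) • resolvent a (z ^ (α:ℂ)) ^ 3

theorem HH_diff (α : ℝ) (a : 𝔸) (z : ℂ) (hz : 0 < z.re) (hm : z ^ (α:ℂ) ∈ resolventSet ℂ a) :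
    DifferentiableAt ℂ (HH α a) z := by
  have hs : z ∈ Complex.slitPlane := Or.inl hz
  have h1 : ∀ c : ℂ, DifferentiableAt ℂ (fun z : ℂ => z ^ c) z := fun c =>
    ((hasDerivAt_id z).cpow_const (c := c) hs).differentiableAt
  have h2 : DifferentiableAt ℂ (fun z : ℂ => resolvent a (z ^ (α:ℂ))) z :=
    DifferentiableAt.comp (g := resolvent a) z
      (spectrum.hasDerivAt_resolvent_const_left hm).differentiableAt (h1 _)
  unfold HH
  exact ((h1 _).const_mul _ |>.smul (h2.pow 2)).add ((h1 _).const_mul _ |>.smul (h2.pow 3))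

theorem HH_bound (α : ℝ) (hα0 : 0 < α) (hα1 : α < 1) (a : 𝔸) (C : ℝ) (hC : 0 ≤ C) (z : ℂ)
    (hz : 0 < z.re) (h1 : ‖resolvent a (z ^ (α:ℂ))‖ ≤ C)
    (h2 : ‖z‖ ^ α * ‖resolvent a (z ^ (α:ℂ))‖ ≤ C) :
    ‖HH α a z‖ ≤ (α * (1 - α) * C ^ 2 + 2 * α ^ 2 * C ^ 3) * ‖z‖ ^ (α - 2) := by
  have hz0 : 0 < ‖z‖ := norm_pos_iff.2 (by rintro rfl; simp at hz)
  unfold HH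
  have e1 : ‖z ^ (α - 2 : ℂ)‖ = ‖z‖ ^ (α - 2) := by
    have := Complex.norm_cpow_real z (α - 2); push_cast at this; exact this
  have e2 : ‖z ^ (2 * α - 2 : ℂ)‖ = ‖z‖ ^ (α - 2) * ‖z‖ ^ α := by
    have := Complex.norm_cpow_real z (2 * α - 2); push_cast at this
    rw [this, ← Real.rpow_add hz0]; ring_nf
  have e3 : ‖(α * (1 - α) : ℂ)‖ = α * (1 - α) := by
    have : (α * (1 - α) : ℂ) = ((α * (1 - α) : ℝ) : ℂ) := by push_cast; ring
    rw [this, Complex.norm_real, Real.norm_of_nonneg (by nlinarith)]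
  have e4 : ‖(2 * α ^ 2 : ℂ)‖ = 2 * α ^ 2 := by
    have : (2 * α ^ 2 : ℂ) = ((2 * α ^ 2 : ℝ) : ℂ) := by push_cast; ring
    rw [this, Complex.norm_real, Real.norm_of_nonneg (by positivity)]
  set r := resolvent a (z ^ (α:ℂ)) with hr
  have hr2 : ‖r ^ 2‖ ≤ ‖r‖ ^ 2 := norm_pow_le' r (by norm_num)
  have hr3 : ‖r ^ 3‖ ≤ ‖r‖ ^ 3 := norm_pow_le' r (by norm_num)
  have h11 : 0 ≤ α * (1 - α) := by nlinarith
  refine (norm_add_le _ _).trans ?_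
  rw [norm_smul, norm_smul, norm_mul _ (z ^ (α - 2 : ℂ)), norm_mul _ (z ^ (2 * α - 2 : ℂ)),
    e1, e2, e3, e4, add_mul]
  apply add_le_add
  · calc _ ≤ α * (1 - α) * ‖z‖ ^ (α - 2) * C ^ 2 := by
          gcongr
          exact hr2.trans (by gcongr)
      _ = _ := by ring
  · calc _ ≤ 2 * α ^ 2 * (‖z‖ ^ (α - 2) * ‖z‖ ^ α) * ‖r‖ ^ 3 := by gcongr
      _ = 2 * α ^ 2 * ‖z‖ ^ (α - 2) * ((‖z‖ ^ α * ‖r‖) * ‖r‖ ^ 2) := by ring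
      _ ≤ 2 * α ^ 2 * ‖z‖ ^ (α - 2) * (C * C ^ 2) := by gcongr
      _ = _ := by ring

theorem HH_hasSum (α : ℝ) (hα0 : 0 < α) (a : 𝔸) (z : ℂ) (hz : 0 < z.re)
    (ha : ‖a‖ < ‖z‖ ^ α) :
    HasSum (fun k : ℕ => (((α * k + α) * (α * k + α + 1) : ℂ) *
      z ^ (-((α * k + α + 2 : ℝ) : ℂ))) • a ^ k) (HH α a z) := by
  have hz0 : z ≠ 0 := by rintro rfl; simp at hz
  have hza : z ^ (α:ℂ) ≠ 0 := by simp [Complex.cpow_eq_zero_iff, hz0]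
  set u : ℂˣ := Units.mk0 _ hza with hu
  set x : 𝔸 := (z ^ (α:ℂ))⁻¹ • a with hx
  have hxn : ‖x‖ < 1 := by
    rw [hx, norm_smul, norm_inv, Complex.norm_cpow_real]
    have : 0 < ‖z‖ ^ α := (norm_nonneg a).trans_lt ha
    rw [inv_mul_lt_one₀ this]; exact ha
  have hres : resolvent a (z ^ (α:ℂ)) = (z ^ (α:ℂ))⁻¹ • Ring.inverse (1 - x) := by
    have := spectrum.units_smul_resolvent_self (r := u) (a := a)
    rw [resolvent, resolvent, Units.smul_def, Units.smul_def] at this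
    simp only [hu, Units.val_mk0, map_one, Units.val_inv_eq_inv_val] at this
    rw [← hx] at this
    rw [resolvent, ← this, smul_smul, inv_mul_cancel₀ hza, one_smul]
  have s1 := hasSum_choose_mul_geometric_of_norm_lt_one' 1 hxn
  have s2 := hasSum_choose_mul_geometric_of_norm_lt_one' 2 hxn
  have s3 := (s1.const_smul ((α * (1 - α) : ℂ) * z ^ (α - 2 : ℂ) * ((z ^ (α:ℂ))⁻¹) ^ 2)).add
    (s2.const_smul ((2 * α ^ 2 : ℂ) * z ^ (2 * α - 2 : ℂ) * ((z ^ (α:ℂ))⁻¹) ^ 3))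
  have hH : HH α a z = ((α * (1 - α) : ℂ) * z ^ (α - 2 : ℂ) * ((z ^ (α:ℂ))⁻¹) ^ 2) • Ring.inverse (1 - x) ^ (1 + 1)
     + ((2 * α ^ 2 : ℂ) * z ^ (2 * α - 2 : ℂ) * ((z ^ (α:ℂ))⁻¹) ^ 3) • Ring.inverse (1 - x) ^ (2 + 1) := by
    unfold HH
    rw [hres, smul_pow, smul_pow, smul_smul, smul_smul]
  rw [hH]
  convert s3 using 1
  funext k
  have hc1 : ((k + 1).choose 1 : 𝔸) = ((k + 1 : ℂ)) • (1 : 𝔸) := by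
    rw [Nat.choose_one_right, ← Algebra.algebraMap_eq_smul_one]; push_cast; simp
  have hc2 : ((k + 2).choose 2 : 𝔸) = (((k + 2) * (k + 1) / 2 : ℂ)) • (1 : 𝔸) := by
    have : (((k + 2) * (k + 1) / 2 : ℂ)) = (((k + 2).choose 2 : ℕ) : ℂ) := by
      rw [Nat.cast_choose_two]; push_cast; ring
    rw [this, ← Algebra.algebraMap_eq_smul_one]; simp
  rw [hc1, hc2, hx, smul_pow, smul_mul_assoc, one_mul, smul_mul_assoc, one_mul, smul_smul, smul_smul, smul_smul,
    smul_smul, ← add_smul]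
  congr 1
  have p0 : z ^ (-((α * k + α + 2 : ℝ) : ℂ)) = z ^ (-(α + 2) : ℂ) * ((z ^ (α:ℂ))⁻¹) ^ k := by
    rw [← Complex.cpow_neg, ← Complex.cpow_nat_mul, ← Complex.cpow_add _ _ hz0]
    congr 1; push_cast; ring
  have p1 : z ^ (α - 2 : ℂ) * ((z ^ (α:ℂ))⁻¹) ^ 2 = z ^ (-(α + 2) : ℂ) := by
    rw [← Complex.cpow_neg, ← Complex.cpow_nat_mul, ← Complex.cpow_add _ _ hz0]
    congr 1; push_cast; ring
  have p2 : z ^ (2 * α - 2 : ℂ) * ((z ^ (α:ℂ))⁻¹) ^ 3 = z ^ (-(α + 2) : ℂ) := by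
    rw [← Complex.cpow_neg, ← Complex.cpow_nat_mul, ← Complex.cpow_add _ _ hz0]
    congr 1; push_cast; ring
  rw [p0, mul_assoc (α * (1 - α) : ℂ), p1, mul_assoc (2 * α ^ 2 : ℂ), p2]
  ring
end A3


section A4
variable {𝔸 : Type*} [NormedRing 𝔸] [NormedAlgebra ℂ 𝔸] [CompleteSpace 𝔸]

noncomputable def mlC (α : ℝ) (a : 𝔸) : 𝔸 :=
  ∑' k : ℕ, (((Real.Gamma (α * k + α))⁻¹ : ℝ) : ℂ) • a ^ k

theorem gamma_pos_ml (α : ℝ) (hα : 0 < α) (k : ℕ) : 0 < Real.Gamma (α * k + α) :=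
  Real.Gamma_pos_of_pos (by positivity)

theorem mlC_coeff (α : ℝ) (hα : 0 < α) (R : ℝ) (hR : 0 ≤ R) :
    Summable fun k : ℕ => ‖(((Real.Gamma (α * k + α))⁻¹ : ℝ) : ℂ)‖ * R ^ k := by
  refine (summable_ml α hα R hR).congr fun k => ?_
  have := gamma_pos_ml α hα k
  rw [Complex.norm_real, Real.norm_of_nonneg (by positivity)]

theorem continuous_mlC (α : ℝ) (hα : 0 < α) : Continuous (mlC α : 𝔸 → 𝔸) :=
  continuous_powser _ (mlC_coeff α hα)

noncomputable def ff (α : ℝ) (a : 𝔸) (t : ℝ) : 𝔸 :=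
  (((max t 0) ^ (1 + α) : ℝ) : ℂ) • mlC α ((((max t 0) ^ α : ℝ) : ℂ) • a)

theorem continuous_ff (α : ℝ) (hα : 0 < α) (a : 𝔸) : Continuous (ff α a) := by
  have hm : Continuous (fun t : ℝ => max t 0) := by fun_prop
  have h1 : Continuous (fun t : ℝ => (max t 0) ^ (1 + α)) :=
    hm.rpow_const (fun _ => Or.inr (by positivity))
  have h2 : Continuous (fun t : ℝ => (max t 0) ^ α) :=
    hm.rpow_const (fun _ => Or.inr (by positivity))
  unfold ff
  exact (Complex.continuous_ofReal.comp h1).smul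
    ((continuous_mlC α hα).comp ((Complex.continuous_ofReal.comp h2).smul continuous_const))

theorem ff_series (α : ℝ) (hα : 0 < α) (a : 𝔸) (z : ℂ) (t : ℝ) (ht : 0 < t) :
    Complex.exp (-(z * t)) • ff α a t = ∑' k : ℕ,
      (((t ^ (α * k + α + 2 - 1) : ℝ) : ℂ) * Complex.exp (-(z * t))) •
        ((((Real.Gamma (α * k + α))⁻¹ : ℝ) : ℂ) • a ^ k) := by
  have hs : Summable (fun k : ℕ => (((Real.Gamma (α * k + α))⁻¹ : ℝ) : ℂ) •
      (((t ^ α : ℝ) : ℂ) • a) ^ k) := by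
    have := summable_powser (fun k : ℕ => (((Real.Gamma (α * k + α))⁻¹ : ℝ) : ℂ))
      (mlC_coeff α hα) (((t ^ α : ℝ) : ℂ) • a)
    exact this.of_norm
  unfold ff mlC
  rw [max_eq_left ht.le, smul_smul, ← hs.tsum_const_smul]
  congr 1; funext k
  rw [smul_pow, smul_smul, smul_smul, smul_smul]
  congr 1
  have : t ^ (α * k + α + 2 - 1) = t ^ (1 + α) * (t ^ α) ^ k := by
    rw [← Real.rpow_natCast, ← Real.rpow_mul ht.le, ← Real.rpow_add ht]; ring_nf
  rw [this]; push_cast; ring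

theorem ff_laplace (α : ℝ) (hα : 0 < α) (a : 𝔸) (z : ℂ) (hz : 0 < z.re) (ha : ‖a‖ < z.re ^ α) :
    IntegrableOn (fun t : ℝ => Complex.exp (-(z * t)) • ff α a t) (Set.Ioi 0) ∧
    ∫ t in Set.Ioi (0:ℝ), Complex.exp (-(z * t)) • ff α a t = HH α a z := by
  set F : ℕ → ℝ → 𝔸 := fun k t => (((t ^ (α * k + α + 2 - 1) : ℝ) : ℂ) * Complex.exp (-(z * t))) •
        ((((Real.Gamma (α * k + α))⁻¹ : ℝ) : ℂ) • a ^ k) with hF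
  have hβ : ∀ k : ℕ, 0 < α * k + α + 2 := fun k => by positivity
  have hFi : ∀ k, IntegrableOn (F k) (Set.Ioi 0) := fun k =>
    (integrableOn_rpow_cexp _ z (by linarith [hβ k]) hz).smul_const _
  have hΓ : ∀ k : ℕ, Real.Gamma (α * k + α + 2) =
      (α * k + α) * (α * k + α + 1) * Real.Gamma (α * k + α) := by
    intro k
    have h0 : 0 < α * k + α := by positivity
    rw [show α * k + α + 2 = (α * k + α + 1) + 1 by ring, Real.Gamma_add_one (by positivity),
      Real.Gamma_add_one (by positivity)]; ring
  have hFint : ∀ k, ∫ t in Set.Ioi (0:ℝ), F k t = (((α * k + α) * (α * k + α + 1) : ℂ) *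
      z ^ (-((α * k + α + 2 : ℝ) : ℂ))) • a ^ k := by
    intro k
    simp only [hF]
    rw [integral_smul_const, gamma_complex _ (hβ k) z hz, smul_smul]
    congr 1
    rw [hΓ k]
    have := (gamma_pos_ml α hα k).ne'
    have h' : (Real.Gamma (α * k + α) : ℂ) ≠ 0 := by exact_mod_cast this
    generalize Real.Gamma (α * k + α) = y at h'
    push_cast
    generalize z ^ (-(α * k + α + 2) : ℂ) = w
    field_simp
  have hFnorm : ∀ k, ∫ t in Set.Ioi (0:ℝ), ‖F k t‖ = (α * k + α) * (α * k + α + 1) *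
      (1 / z.re) ^ (α * k + α + 2) * ‖a ^ k‖ := by
    intro k
    have h1 := Real.integral_rpow_mul_exp_neg_mul_Ioi (hβ k) hz
    have h2 : ∀ t ∈ Set.Ioi (0:ℝ), ‖F k t‖ = (t ^ (α * k + α + 2 - 1) * Real.exp (-(z.re * t))) *
        ((Real.Gamma (α * k + α))⁻¹ * ‖a ^ k‖) := by
      intro t ht
      have ht' : (0:ℝ) < t := ht
      have := gamma_pos_ml α hα k
      simp only [hF]
      rw [norm_smul, norm_smul, norm_mul, norm_cexp_neg_mul, Complex.norm_real, Complex.norm_real,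
        Real.norm_of_nonneg (by positivity), Real.norm_of_nonneg (by positivity)]
    rw [setIntegral_congr_fun measurableSet_Ioi h2, integral_mul_const, h1, hΓ k]
    have := (gamma_pos_ml α hα k).ne'
    field_simp
  have hsum : Summable fun k => ∫ t in Set.Ioi (0:ℝ), ‖F k t‖ := by
    have h1 := (HH_hasSum α hα ((‖a‖ : ℝ) : ℂ) ((z.re : ℝ) : ℂ) (by simpa using hz)
      (by simpa [abs_of_pos hz] using ha)).summable.norm
    refine Summable.of_nonneg_of_le (fun k => integral_nonneg fun _ => norm_nonneg _) (fun k => ?_)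
      (h1.mul_left (max 1 ‖(1:𝔸)‖))
    rw [hFnorm]
    have e : ‖(((α * k + α) * (α * k + α + 1) : ℂ) *
      ((z.re : ℝ) : ℂ) ^ (-((α * k + α + 2 : ℝ) : ℂ))) • ((‖a‖ : ℝ) : ℂ) ^ k‖ =
      (α * k + α) * (α * k + α + 1) * (1 / z.re) ^ (α * k + α + 2) * ‖a‖ ^ k := by
      have e1 : (((α * k + α) * (α * k + α + 1) : ℂ) *
        ((z.re : ℝ) : ℂ) ^ (-((α * k + α + 2 : ℝ) : ℂ))) • ((‖a‖ : ℝ) : ℂ) ^ k =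
        (((α * k + α) * (α * k + α + 1) * (1 / z.re) ^ (α * k + α + 2) * ‖a‖ ^ k : ℝ) : ℂ) := by
        rw [one_div, Real.inv_rpow hz.le, ← Real.rpow_neg hz.le, smul_eq_mul]
        rw [← Complex.ofReal_neg, ← Complex.ofReal_cpow hz.le]
        push_cast; ring
      rw [e1, Complex.norm_real, Real.norm_of_nonneg (by positivity)]
    rw [e]
    have := norm_pow_le_max a k
    calc _ ≤ (α * k + α) * (α * k + α + 1) *
      (1 / z.re) ^ (α * k + α + 2) * (max 1 ‖(1:𝔸)‖ * ‖a‖ ^ k) := by gcongr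
      _ = _ := by ring
  have hcongr : ∀ t ∈ Set.Ioi (0:ℝ), Complex.exp (-(z * t)) • ff α a t = ∑' k, F k t :=
    fun t ht => ff_series α hα a z t ht
  have hS := hasSum_integral_of_summable_integral_norm hFi hsum
  constructor
  · refine ⟨?_, ?_⟩
    · apply Continuous.aestronglyMeasurable
      have := continuous_ff α hα a
      fun_prop
    · have h1 : ∫⁻ t in Set.Ioi (0:ℝ), ‖Complex.exp (-(z * t)) • ff α a t‖ₑ ≤
          ∫⁻ t in Set.Ioi (0:ℝ), ∑' k, ‖F k t‖ₑ := by
        apply setLIntegral_mono' measurableSet_Ioi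
        intro t ht
        rw [hcongr t ht]
        exact enorm_tsum_le_tsum_enorm
      refine lt_of_le_of_lt h1 ?_
      rw [lintegral_tsum (fun k => (hFi k).1.enorm)]
      have h2 : ∀ k, ∫⁻ t in Set.Ioi (0:ℝ), ‖F k t‖ₑ = ENNReal.ofReal (∫ t in Set.Ioi (0:ℝ), ‖F k t‖) := by
        intro k
        rw [ofReal_integral_norm_eq_lintegral_enorm (hFi k)]
      simp_rw [h2]
      exact hsum.tsum_ofReal_lt_top
  · rw [setIntegral_congr_fun measurableSet_Ioi hcongr, ← hS.tsum_eq]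
    simp_rw [hFint]
    exact (HH_hasSum α hα a z hz (ha.trans_le (by
      gcongr; exact Complex.re_le_norm z))).tsum_eq
end A4


theorem norm_line (x y : ℝ) (hx : 0 < x) (p : ℝ) :
    ‖(x:ℂ) + y * Complex.I‖ ^ p = x ^ p * (1 + ‖y / x‖ ^ 2) ^ (p / 2) := by
  have h1 : ‖(x:ℂ) + y * Complex.I‖ = x * (1 + (y / x) ^ 2) ^ (1/2 : ℝ) := by
    rw [Complex.norm_add_mul_I, Real.sqrt_eq_rpow]
    rw [show x ^ 2 + y ^ 2 = x ^ 2 * (1 + (y/x) ^ 2) by field_simp]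
    rw [Real.mul_rpow (by positivity) (by positivity), ← Real.sqrt_eq_rpow, Real.sqrt_sq hx.le]
  rw [h1, Real.mul_rpow hx.le (by positivity), ← Real.rpow_mul (by positivity), Real.norm_eq_abs, sq_abs]
  congr 2; ring

theorem line_integral (α : ℝ) (hα1 : α < 1) :
    ∃ J : ℝ, 0 ≤ J ∧ ∀ x : ℝ, 0 < x →
      Integrable (fun y : ℝ => ‖(x:ℂ) + y * Complex.I‖ ^ (α - 2)) ∧
      ∫ y : ℝ, ‖(x:ℂ) + y * Complex.I‖ ^ (α - 2) = x ^ (α - 1) * J := by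
  have h0 : Integrable (fun y : ℝ => (1 + ‖y‖ ^ 2) ^ (-(2 - α) / 2)) :=
    integrable_rpow_neg_one_add_norm_sq (by simp; linarith)
  rw [show -(2 - α) / 2 = (α - 2) / 2 by ring] at h0
  refine ⟨∫ y : ℝ, (1 + ‖y‖ ^ 2) ^ ((α - 2) / 2), integral_nonneg fun y => by positivity, ?_⟩
  intro x hx
  simp_rw [norm_line x _ hx]
  refine ⟨(h0.comp_div hx.ne').const_mul _, ?_⟩
  rw [integral_const_mul, Measure.integral_comp_div (fun y : ℝ => (1 + ‖y‖ ^ 2) ^ ((α - 2) / 2)),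
    abs_of_pos hx, smul_eq_mul, ← mul_assoc, ← Real.rpow_add_one hx.ne']
  congr 2; ring

section A5
variable {𝔸 : Type*} [NormedAddCommGroup 𝔸] [NormedSpace ℂ 𝔸]

theorem line_bound (α C t : ℝ) (H : ℂ → 𝔸)
    (hb : ∀ z : ℂ, 0 < z.re → ‖H z‖ ≤ C * ‖z‖ ^ (α - 2)) (z : ℂ) (hz : 0 < z.re) :
    ‖Complex.exp (z * t) • H z‖ ≤ Real.exp (z.re * t) * (C * ‖z‖ ^ (α - 2)) := by
  rw [norm_smul, Complex.norm_exp]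
  have : (z * t).re = z.re * t := by simp
  rw [this]
  gcongr
  exact hb z hz

theorem line_integrable (α : ℝ) (hα1 : α < 1) (C t : ℝ) (H : ℂ → 𝔸)
    (hd : ∀ z : ℂ, 0 < z.re → DifferentiableAt ℂ H z)
    (hb : ∀ z : ℂ, 0 < z.re → ‖H z‖ ≤ C * ‖z‖ ^ (α - 2)) (c : ℝ) (hc : 0 < c) :
    Integrable (fun y : ℝ => Complex.exp (((c:ℂ) + y * Complex.I) * t) • H (c + y * Complex.I)) := by
  obtain ⟨J, hJ, hline⟩ := line_integral α hα1
  refine Integrable.mono' (((hline c hc).1.const_mul C).const_mul (Real.exp (c * t))) ?_ ?_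
  · apply Continuous.aestronglyMeasurable
    have h1 : Continuous (fun y : ℝ => H (c + y * Complex.I)) := by
      rw [continuous_iff_continuousAt]
      intro y
      exact ContinuousAt.comp (f := fun y : ℝ => (c:ℂ) + y * Complex.I) (g := H)
        (hd _ (by simpa using hc)).continuousAt (by fun_prop)
    exact Continuous.smul (by fun_prop) h1
  · refine Eventually.of_forall fun y => ?_
    have := line_bound α C t H hb (c + y * Complex.I) (by simpa using hc)
    simpa using this

theorem line_shift (α : ℝ) (hα1 : α < 1) (C t : ℝ) (hC : 0 ≤ C) (H : ℂ → 𝔸)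
    (hd : ∀ z : ℂ, 0 < z.re → DifferentiableAt ℂ H z)
    (hb : ∀ z : ℂ, 0 < z.re → ‖H z‖ ≤ C * ‖z‖ ^ (α - 2)) (c c' : ℝ) (hc : 0 < c) (hc' : 0 < c') :
    ∫ y : ℝ, Complex.exp (((c:ℂ) + y * Complex.I) * t) • H (c + y * Complex.I) =
    ∫ y : ℝ, Complex.exp (((c':ℂ) + y * Complex.I) * t) • H (c' + y * Complex.I) := by
  set Φ : ℂ → 𝔸 := fun z => Complex.exp (z * t) • H z with hΦ
  have hΦd : ∀ z : ℂ, 0 < z.re → DifferentiableAt ℂ Φ z := by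
    intro z hz
    have := hd z hz
    have h2 : DifferentiableAt ℂ (fun z : ℂ => Complex.exp (z * t)) z := by fun_prop
    exact h2.smul this
  have hpos : ∀ x ∈ Set.uIcc c c', 0 < x := by
    intro x hx
    rw [Set.mem_uIcc] at hx
    rcases hx with h | h <;> linarith [h.1]
  have hrect : ∀ X : ℝ, ((∫ x : ℝ in c..c', Φ (x + ((-X : ℝ) : ℂ) * Complex.I)) -
      ∫ x : ℝ in c..c', Φ (x + (X:ℂ) * Complex.I)) +
      Complex.I • (∫ y : ℝ in (-X)..X, Φ (c' + y * Complex.I)) -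
      Complex.I • (∫ y : ℝ in (-X)..X, Φ (c + y * Complex.I)) = 0 := by
    intro X
    have := Complex.integral_boundary_rect_eq_zero_of_differentiableOn Φ ⟨c, -X⟩ ⟨c', X⟩ (by
      intro z hz
      exact (hΦd z (hpos _ hz.1)).differentiableWithinAt)
    simpa using this
  have hhor : ∀ σ : ℝ, |σ| = 1 → Tendsto (fun X : ℝ => ∫ x : ℝ in c..c',
      Φ (x + ((σ * X : ℝ) : ℂ) * Complex.I)) atTop (𝓝 0) := by
    intro σ hσ
    have hlim : Tendsto (fun X : ℝ => Real.exp ((c + c') * |t|) * (C * X ^ (α - 2)) * |c' - c|)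
        atTop (𝓝 0) := by
      have := tendsto_rpow_neg_atTop (show 0 < 2 - α by linarith)
      rw [show -(2 - α) = α - 2 by ring] at this
      have h2 := ((this.const_mul C).const_mul (Real.exp ((c + c') * |t|))).mul_const |c' - c|
      simpa using h2
    refine squeeze_zero_norm' ?_ hlim
    filter_upwards [eventually_gt_atTop 0] with X hX
    apply intervalIntegral.norm_integral_le_of_norm_le_const
    intro x hx
    have hx' : x ∈ Set.uIcc c c' := Set.uIoc_subset_uIcc hx
    have hx0 := hpos x hx'
    have h1 := line_bound α C t H hb (x + ((σ * X : ℝ) : ℂ) * Complex.I) (by simpa using hx0)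
    refine h1.trans ?_
    have hre : ((x:ℂ) + ((σ * X : ℝ) : ℂ) * Complex.I).re = x := by simp
    have him : ((x:ℂ) + ((σ * X : ℝ) : ℂ) * Complex.I).im = σ * X := by simp
    have hXle : X ≤ ‖(x:ℂ) + ((σ * X : ℝ) : ℂ) * Complex.I‖ := by
      have := Complex.abs_im_le_norm ((x:ℂ) + ((σ * X : ℝ) : ℂ) * Complex.I)
      rw [him, abs_mul, hσ, one_mul, abs_of_pos hX] at this
      exact this
    rw [hre]
    have hxle : x ≤ c + c' := by
      rw [Set.mem_uIcc] at hx'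
      rcases hx' with h | h <;> linarith [h.2]
    gcongr ?_ * (C * ?_)
    · apply Real.exp_le_exp.2
      calc x * t ≤ x * |t| := by gcongr; exact le_abs_self t
        _ ≤ _ := by gcongr
    · exact Real.rpow_le_rpow_of_nonpos hX hXle (by linarith)
  have hv : ∀ c : ℝ, 0 < c → Tendsto (fun X : ℝ => ∫ y : ℝ in (-X)..X, Φ (c + y * Complex.I)) atTop
      (𝓝 (∫ y : ℝ, Φ (c + y * Complex.I))) := fun c hc =>
    intervalIntegral_tendsto_integral (line_integrable α hα1 C t H hd hb c hc)
      tendsto_neg_atTop_atBot tendsto_id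
  have hlim := (((hhor (-1) (by simp)).sub (hhor 1 (by simp))).add
    ((hv c' hc').const_smul Complex.I)).sub ((hv c hc).const_smul Complex.I)
  have hz : (fun X : ℝ => ((∫ x : ℝ in c..c', Φ (x + ((-1 * X : ℝ) : ℂ) * Complex.I)) -
      ∫ x : ℝ in c..c', Φ (x + ((1 * X : ℝ):ℂ) * Complex.I)) +
      Complex.I • (∫ y : ℝ in (-X)..X, Φ (c' + y * Complex.I)) -
      Complex.I • (∫ y : ℝ in (-X)..X, Φ (c + y * Complex.I))) = fun _ => 0 := by
    funext X
    rw [neg_one_mul, one_mul]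
    exact hrect X
  have h0 := tendsto_nhds_unique hlim (by rw [hz]; exact tendsto_const_nhds)
  rw [sub_zero, zero_add, ← smul_sub] at h0
  have := (smul_eq_zero.1 h0).resolve_left Complex.I_ne_zero
  exact (sub_eq_zero.1 this).symm
end A5


section A6
variable {𝔸 : Type*} [NormedRing 𝔸] [NormedAlgebra ℂ 𝔸] [CompleteSpace 𝔸]

theorem ff_nonpos (α : ℝ) (hα : 0 < α) (a : 𝔸) (t : ℝ) (ht : t ≤ 0) : ff α a t = 0 := by
  unfold ff
  rw [max_eq_right ht, Real.zero_rpow (by positivity)]; simp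

theorem ff_inversion (α : ℝ) (hα0 : 0 < α) (hα1 : α < 1) (a : 𝔸) (C : ℝ)
    (hd : ∀ z : ℂ, 0 < z.re → DifferentiableAt ℂ (HH α a) z)
    (hb : ∀ z : ℂ, 0 < z.re → ‖HH α a z‖ ≤ C * ‖z‖ ^ (α - 2)) :
    ∃ c : ℝ, 0 < c ∧ ∀ t : ℝ, ff α a t = (2 * Real.pi)⁻¹ •
      ∫ y : ℝ, Complex.exp (((c:ℂ) + y * Complex.I) * t) • HH α a (c + y * Complex.I) := by
  have hpi := Real.pi_pos
  set c : ℝ := (‖a‖ + 1) ^ (α⁻¹) with hc_def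
  have hc : 0 < c := by positivity
  have hcα : ‖a‖ < c ^ α := by
    rw [hc_def, ← Real.rpow_mul (by positivity), inv_mul_cancel₀ hα0.ne', Real.rpow_one]; linarith
  refine ⟨c, hc, fun t => ?_⟩
  set G : ℝ → 𝔸 := fun v => Complex.exp (-((c:ℂ) * v)) • ff α a v with hG
  have hff := continuous_ff α hα0 a
  have hGc : Continuous G := by
    exact Continuous.smul (by fun_prop) hff
  have hG0 : ∀ v, v ∉ Set.Ioi (0:ℝ) → G v = 0 := by
    intro v hv
    simp only [hG]
    rw [ff_nonpos α hα0 a v (not_lt.1 hv), smul_zero]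
  have hGi : Integrable G := by
    have := (ff_laplace α hα0 a (c:ℂ) (by simpa using hc) (by simpa using hcα)).1
    exact (integrableOn_iff_integrable_of_support_subset (fun v hv => by
      by_contra h; exact hv (hG0 v h))).1 this
  have hF : FourierTransform.fourier G = fun ξ : ℝ => HH α a (c + ((2 * Real.pi * ξ : ℝ) : ℂ) * Complex.I) := by
    funext ξ
    rw [Real.fourier_real_eq_integral_exp_smul]
    have h1 := (ff_laplace α hα0 a (c + ((2 * Real.pi * ξ : ℝ) : ℂ) * Complex.I) (by simpa using hc)
      (by simpa using hcα)).2
    rw [← h1, setIntegral_eq_integral_of_forall_compl_eq_zero]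
    · congr 1; funext v
      simp only [hG]
      rw [smul_smul, ← Complex.exp_add]
      congr 2
      push_cast; ring
    · intro v hv
      rw [ff_nonpos α hα0 a v (not_lt.1 hv), smul_zero]
  have hFi : Integrable (FourierTransform.fourier G) := by
    rw [hF]
    have := line_integrable α hα1 C 0 (HH α a) hd hb c hc
    have h2 := this.comp_mul_left' (show 2 * Real.pi ≠ 0 by positivity)
    simpa using h2
  have hinv := congrFun (hGc.fourierInv_fourier_eq hGi hFi) t
  rw [Real.fourierInv_eq', hF] at hinv
  have h3 : ff α a t = Complex.exp ((c:ℂ) * t) • G t := by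
    simp only [hG]
    rw [smul_smul, ← Complex.exp_add]; simp
  rw [h3, ← hinv, ← integral_smul]
  have h4 := Measure.integral_comp_mul_left (fun y : ℝ =>
    Complex.exp (((c:ℂ) + y * Complex.I) * t) • HH α a (c + y * Complex.I)) (2 * Real.pi)
  rw [abs_of_pos (by positivity)] at h4
  rw [← h4]
  congr 1; funext ξ
  rw [smul_smul, ← Complex.exp_add]
  congr 2
  simp
  ring

theorem mlC_decay (α : ℝ) (hα0 : 0 < α) (hα1 : α < 1) (a : 𝔸)
    (hspec : ∀ μ ∈ spectrum ℂ a, μ ≠ 0 ∧ α * Real.pi / 2 < |Complex.arg μ|) :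
    ∃ C : ℝ, 0 ≤ C ∧ ∀ t : ℝ, 0 < t → ‖mlC α (((t ^ α : ℝ) : ℂ) • a)‖ ≤ C * t ^ (-(2 * α)) := by
  have hpi := Real.pi_pos
  obtain ⟨C, hC, hres⟩ := resolvent_sector_bound α hα0 hα1 a hspec
  set C' := α * (1 - α) * C ^ 2 + 2 * α ^ 2 * C ^ 3 with hC'
  have hC'0 : 0 ≤ C' := by
    have : 0 ≤ α * (1 - α) := by nlinarith
    positivity
  have hd : ∀ z : ℂ, 0 < z.re → DifferentiableAt ℂ (HH α a) z := fun z hz =>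
    HH_diff α a z hz (hres z hz).1
  have hb : ∀ z : ℂ, 0 < z.re → ‖HH α a z‖ ≤ C' * ‖z‖ ^ (α - 2) := fun z hz =>
    HH_bound α hα0 hα1 a C hC z hz (hres z hz).2.1 (hres z hz).2.2
  obtain ⟨c, hc, hinv⟩ := ff_inversion α hα0 hα1 a C' hd hb
  obtain ⟨J, hJ, hline⟩ := line_integral α hα1
  refine ⟨(2 * Real.pi)⁻¹ * (Real.exp 1 * (C' * J)), by positivity, fun t ht => ?_⟩
  have h1 := hinv t
  have htinv : 0 < t⁻¹ := by positivity
  rw [line_shift α hα1 C' t hC'0 (HH α a) hd hb c t⁻¹ hc htinv] at h1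
  have h2 : ‖ff α a t‖ ≤ (2 * Real.pi)⁻¹ * (Real.exp 1 * (C' * (t⁻¹ ^ (α - 1) * J))) := by
    rw [h1, norm_smul, Real.norm_of_nonneg (by positivity)]
    gcongr
    rw [← (hline t⁻¹ htinv).2, ← integral_const_mul, ← integral_const_mul]
    refine norm_integral_le_of_norm_le (((hline t⁻¹ htinv).1.const_mul C').const_mul _) ?_
    refine Eventually.of_forall fun y => ?_
    have := line_bound α C' t (HH α a) hb (((t⁻¹ : ℝ) : ℂ) + y * Complex.I) (by simpa using ht)
    refine this.trans (le_of_eq ?_)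
    congr 2
    simp [ht.ne']
  unfold ff at h2
  rw [max_eq_left ht.le, norm_smul, Complex.norm_real, Real.norm_of_nonneg (by positivity)] at h2
  have hp : 0 < t ^ (1 + α) := by positivity
  rw [mul_comm, ← le_div_iff₀ hp] at h2
  refine h2.trans (le_of_eq ?_)
  rw [Real.inv_rpow ht.le, ← Real.rpow_neg ht.le, div_eq_mul_inv, ← Real.rpow_neg ht.le]
  have : t ^ (-(2 * α)) = t ^ (-(α - 1)) * t ^ (-(1 + α)) := by
    rw [← Real.rpow_add ht]; ring_nf
  rw [this]; ring
end A6


section B1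

theorem beta_int (a b : ℝ) (ha : 0 < a) (hb : 0 < b) :
    IntervalIntegrable (fun u : ℝ => (1 - u) ^ (a - 1) * u ^ (b - 1)) volume 0 1 := by
  have h := (Complex.betaIntegral_convergent (u := (b:ℂ)) (v := (a:ℂ)) (by simpa) (by simpa)).norm
  rw [intervalIntegrable_iff_integrableOn_Ioo_of_le zero_le_one] at h ⊢
  refine h.congr_fun (fun u hu => ?_) measurableSet_Ioo
  have h1 : (1 - (u:ℂ)) = ((1 - u : ℝ) : ℂ) := by push_cast; ring
  simp only [norm_mul]
  rw [h1, Complex.norm_cpow_eq_rpow_re_of_pos hu.1,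
    Complex.norm_cpow_eq_rpow_re_of_pos (by linarith [hu.2])]
  simp [mul_comm]

theorem cont_param {V : Type*} [NormedAddCommGroup V] [NormedSpace ℝ V] (p : ℝ → ℝ)
    (hp : IntervalIntegrable p volume 0 1) (G : ℝ → ℝ → V) (hG : Continuous (Function.uncurry G)) :
    Continuous fun t => ∫ u in (0:ℝ)..1, p u • G t u := by
  rw [continuous_iff_continuousAt]
  intro t0
  obtain ⟨C, hC⟩ := ((isCompact_Icc (a := t0 - 1) (b := t0 + 1)).prod
    (isCompact_Icc (a := (0:ℝ)) (b := 1))).exists_bound_of_continuousOn hG.continuousOn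
  have hGu : ∀ t, Continuous (G t) := fun t => hG.comp (by fun_prop : Continuous fun u : ℝ => (t, u))
  refine intervalIntegral.continuousAt_of_dominated_interval (bound := fun u => ‖p u‖ * C) ?_ ?_ ?_ ?_
  · refine Eventually.of_forall fun t => ?_
    exact hp.def'.1.smul (hGu t).aestronglyMeasurable
  · filter_upwards [Icc_mem_nhds (show t0 - 1 < t0 by linarith) (show t0 < t0 + 1 by linarith)] with t ht
    refine Eventually.of_forall fun u hu => ?_
    rw [Set.uIoc_of_le zero_le_one] at hu
    rw [norm_smul]
    gcongr
    exact hC (t, u) ⟨ht, hu.1.le, hu.2⟩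
  · exact hp.norm.mul_const C
  · refine Eventually.of_forall fun u _ => ?_
    have : Continuous fun t => G t u := hG.comp (by fun_prop : Continuous fun t : ℝ => (t, u))
    exact (this.const_smul (p u)).continuousAt

theorem FTC_bound (α : ℝ) (hα : 0 < α) (t : ℝ) (ht : 0 ≤ t) :
    IntervalIntegrable (fun v : ℝ => t ^ α * v ^ (α - 1) / (1 + (t * v) ^ α) ^ 2) volume 0 1 ∧
    ∫ v in (0:ℝ)..1, t ^ α * v ^ (α - 1) / (1 + (t * v) ^ α) ^ 2 ≤ 1 / α := by
  have hta : 0 ≤ t ^ α := Real.rpow_nonneg ht α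
  have hcr : Continuous fun v : ℝ => v ^ α := Real.continuous_rpow_const hα.le
  have key : ∀ v ∈ Set.Icc (0:ℝ) 1, 0 < 1 + t ^ α * v ^ α := fun v hv => by
    have := Real.rpow_nonneg hv.1 α
    positivity
  have hI : IntervalIntegrable (fun v : ℝ => t ^ α * v ^ (α - 1) / (1 + t ^ α * v ^ α) ^ 2) volume 0 1 := by
    have h1 : IntervalIntegrable (fun v : ℝ => v ^ (α - 1)) volume 0 1 :=
      intervalIntegral.intervalIntegrable_rpow' (by linarith)
    have h2 : ContinuousOn (fun v : ℝ => t ^ α / (1 + t ^ α * v ^ α) ^ 2) (Set.uIcc 0 1) := by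
      rw [Set.uIcc_of_le zero_le_one]
      refine ContinuousOn.div continuousOn_const (by fun_prop) fun v hv => ?_
      have := key v hv
      positivity
    refine (h1.mul_continuousOn h2).congr (fun v _ => ?_)
    beta_reduce
    ring
  have heq : ∀ v ∈ Set.uIcc (0:ℝ) 1, t ^ α * v ^ (α - 1) / (1 + t ^ α * v ^ α) ^ 2
      = t ^ α * v ^ (α - 1) / (1 + (t * v) ^ α) ^ 2 := fun v hv => by
    rw [Set.uIcc_of_le zero_le_one] at hv
    rw [Real.mul_rpow ht hv.1]
  refine ⟨hI.congr (fun v hv => heq v (Set.uIoc_subset_uIcc hv)), ?_⟩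
  rw [← intervalIntegral.integral_congr heq]
  have := intervalIntegral.integral_eq_sub_of_hasDerivAt_of_le (a := (0:ℝ)) (b := 1) zero_le_one
    (f := fun v => - (1 / α) * (1 + t ^ α * v ^ α)⁻¹)
    (f' := fun v : ℝ => t ^ α * v ^ (α - 1) / (1 + t ^ α * v ^ α) ^ 2)
    (by
      refine ContinuousOn.mul continuousOn_const (ContinuousOn.inv₀ (by fun_prop) fun v hv => (key v hv).ne'))
    (by
      intro v hv
      have h3 := key v ⟨hv.1.le, hv.2.le⟩
      have h4 := ((Real.hasDerivAt_rpow_const (x := v) (p := α) (Or.inl hv.1.ne')).const_mul (t ^ α)).const_add 1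
      refine ((h4.fun_inv h3.ne').const_mul (-(1 / α))).congr_deriv ?_
      field_simp) hI
  rw [this]
  have h5 := key 1 (by simp)
  have h6 := key 0 (by simp)
  simp only [Real.one_rpow, Real.zero_rpow hα.ne', mul_one, mul_zero, add_zero, inv_one] at *
  have : 0 ≤ 1 / α * (1 + t ^ α)⁻¹ := by positivity
  linarith

theorem rpow_half_bound (x a : ℝ) (hx : 1 / 2 ≤ x) (ha : -1 ≤ a) (ha0 : a ≤ 0) : x ^ a ≤ 2 := by
  calc x ^ a ≤ (1 / 2 : ℝ) ^ a := Real.rpow_le_rpow_of_nonpos (by norm_num) hx ha0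
    _ ≤ (1 / 2 : ℝ) ^ (-1 : ℝ) := Real.rpow_le_rpow_of_exponent_ge (by norm_num) (by norm_num) ha
    _ = 2 := by rw [Real.rpow_neg_one]; norm_num

theorem M_bound (α : ℝ) (hα : 0 < α) (hα1 : α < 1) :
    ∃ M, 0 ≤ M ∧ ∀ t, 0 ≤ t → ∃ J : ℝ → ℝ, IntervalIntegrable J volume 0 1 ∧
      ∫ u in (0:ℝ)..1, J u ≤ M ∧ ∀ u ∈ Set.Ioo (0:ℝ) 1,
        t ^ α * ((1 - u) ^ (α - 1) * u ^ (α - 1)) / (1 + (t * (1 - u)) ^ α) ^ 2 ≤ J u := by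
  have hB := beta_int α α hα hα
  have hB0 : 0 ≤ ∫ u in (0:ℝ)..1, (1 - u) ^ (α - 1) * u ^ (α - 1) := by
    refine intervalIntegral.integral_nonneg zero_le_one fun u hu => ?_
    exact mul_nonneg (Real.rpow_nonneg (by linarith [hu.2]) _) (Real.rpow_nonneg hu.1 _)
  refine ⟨4 * (∫ u in (0:ℝ)..1, (1 - u) ^ (α - 1) * u ^ (α - 1)) + 2 * (1 / α), by positivity, fun t ht => ?_⟩
  obtain ⟨hI, hle⟩ := FTC_bound α hα t ht
  have hI2 := hI.comp_sub_left 1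
  simp only [sub_self, sub_zero] at hI2
  refine ⟨fun u => 4 * ((1 - u) ^ (α - 1) * u ^ (α - 1)) +
    2 * (t ^ α * (1 - u) ^ (α - 1) / (1 + (t * (1 - u)) ^ α) ^ 2),
    (hB.const_mul 4).add (hI2.symm.const_mul 2), ?_, ?_⟩
  · rw [intervalIntegral.integral_add (hB.const_mul 4) (hI2.symm.const_mul 2),
      intervalIntegral.integral_const_mul, intervalIntegral.integral_const_mul,
      intervalIntegral.integral_comp_sub_left (fun v : ℝ => t ^ α * v ^ (α - 1) / (1 + (t * v) ^ α) ^ 2) 1]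
    simp only [sub_self, sub_zero]
    linarith
  · intro u hu
    have hv : 0 < 1 - u := by linarith [hu.2]
    have h1 : 0 < (1 - u) ^ (α - 1) := Real.rpow_pos_of_pos hv _
    have h2 : 0 < u ^ (α - 1) := Real.rpow_pos_of_pos hu.1 _
    have h3 : 0 ≤ t ^ α := Real.rpow_nonneg ht _
    have h4 : 0 < (1 - u) ^ α := Real.rpow_pos_of_pos hv _
    have h0 : (t * (1 - u)) ^ α = t ^ α * (1 - u) ^ α := Real.mul_rpow ht hv.le
    beta_reduce
    rw [h0]
    set x := t ^ α
    set v := (1 - u) ^ α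
    rcases le_total u (1 / 2) with h | h
    · have h5 : v⁻¹ ≤ 2 := by
        rw [← Real.rpow_neg hv.le]
        exact rpow_half_bound _ _ (by linarith) (by linarith) (by linarith)
      have h6 : x / (1 + x * v) ^ 2 ≤ 2 := by
        rw [div_le_iff₀ (by positivity)]
        have : 1 ≤ 2 * v := by
          rw [inv_le_iff_one_le_mul₀ h4] at h5
          exact h5
        nlinarith [mul_nonneg h3 h4.le, sq_nonneg (x * v)]
      have h7 : 0 ≤ 2 * (x * (1 - u) ^ (α - 1) / (1 + x * v) ^ 2) := by positivity
      calc _ = (x / (1 + x * v) ^ 2) * ((1 - u) ^ (α - 1) * u ^ (α - 1)) := by ring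
        _ ≤ 2 * ((1 - u) ^ (α - 1) * u ^ (α - 1)) := by gcongr
        _ ≤ _ := by nlinarith [mul_pos h1 h2]
    · have h5 : u ^ (α - 1) ≤ 2 := rpow_half_bound _ _ h (by linarith) (by linarith)
      have h7 : 0 ≤ 4 * ((1 - u) ^ (α - 1) * u ^ (α - 1)) := by positivity
      calc _ = u ^ (α - 1) * (x * (1 - u) ^ (α - 1) / (1 + x * v) ^ 2) := by ring
        _ ≤ 2 * (x * (1 - u) ^ (α - 1) / (1 + x * v) ^ 2) := by gcongr
        _ ≤ _ := by linarith

theorem exp_neg_le_rpow (x δ : ℝ) (hx : 0 < x) (hδ : 0 < δ) (hδ1 : δ ≤ 1) :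
    Real.exp (-x) ≤ x ^ (-δ) := by
  rw [Real.exp_neg, Real.rpow_neg hx.le]
  have h1 : 0 < x ^ δ := Real.rpow_pos_of_pos hx _
  have : x ^ δ ≤ Real.exp x := by
    have h2 := Real.add_one_le_exp x
    rcases le_total x 1 with h | h
    · have := Real.rpow_le_one hx.le h hδ.le
      linarith
    · have := Real.rpow_le_rpow_of_exponent_le h hδ1
      rw [Real.rpow_one] at this
      linarith
  gcongr

theorem beta_scaled (a b ρ : ℝ) (ha : 0 < a) (hb : 0 < b) (hρ : 0 < ρ) :
    IntervalIntegrable (fun u : ℝ => (ρ - u) ^ (a - 1) * u ^ (b - 1)) volume 0 ρ ∧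
    ∫ u in (0:ℝ)..ρ, (ρ - u) ^ (a - 1) * u ^ (b - 1) =
      ρ ^ (a + b - 1) * ∫ u in (0:ℝ)..1, (1 - u) ^ (a - 1) * u ^ (b - 1) := by
  have hsc : ∀ u ∈ Set.Icc (0:ℝ) ρ, ρ ^ (a + b - 2) * ((1 - u / ρ) ^ (a - 1) * (u / ρ) ^ (b - 1)) =
      (ρ - u) ^ (a - 1) * u ^ (b - 1) := fun u hu => by
    have h1 : 1 - u / ρ = (ρ - u) / ρ := by field_simp
    rw [h1, Real.div_rpow (by linarith [hu.2]) hρ.le, Real.div_rpow hu.1 hρ.le,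
      show a + b - 2 = (a - 1) + (b - 1) by ring, Real.rpow_add hρ]
    have := Real.rpow_pos_of_pos hρ (a - 1)
    have := Real.rpow_pos_of_pos hρ (b - 1)
    field_simp
  have hi : Set.uIcc 0 ρ = Set.Icc 0 ρ := Set.uIcc_of_le hρ.le
  constructor
  · have h := (beta_int a b ha hb).comp_mul_right (c := ρ⁻¹)
    simp only [zero_div, one_div, inv_inv, ← div_eq_mul_inv] at h
    refine (h.const_mul (ρ ^ (a + b - 2))).congr fun u hu => ?_
    exact hsc u (hi ▸ Set.uIoc_subset_uIcc hu)
  · rw [← intervalIntegral.integral_congr (fun u hu => hsc u (hi ▸ hu)),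
      intervalIntegral.integral_const_mul,
      intervalIntegral.integral_comp_div (fun u : ℝ => (1 - u) ^ (a - 1) * u ^ (b - 1)) hρ.ne']
    rw [zero_div, div_self hρ.ne', smul_eq_mul, ← mul_assoc]
    congr 1
    rw [show a + b - 1 = (a + b - 2) + 1 by ring, Real.rpow_add hρ, Real.rpow_one]

theorem B_bound (α : ℝ) (hα : 0 < α) (hα1 : α < 1) :
    ∃ B, 0 ≤ B ∧ ∀ t m γ, 0 < m → m ≤ t → 0 < γ → ∃ J : ℝ → ℝ, IntervalIntegrable J volume 0 1 ∧
      ∫ u in (0:ℝ)..1, J u ≤ B * (γ ^ (-(α / 2)) * m ^ (α / 2)) ∧ ∀ u ∈ Set.Ioo (0:ℝ) 1, 0 ≤ J u ∧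
        (t * u < m → t ^ α * ((1 - u) ^ (α - 1) * u ^ (α - 1)) * Real.exp (-(γ * (m - t * u))) ≤ J u) := by
  have hB0 : 0 ≤ ∫ u in (0:ℝ)..1, (1 - u) ^ (α / 2 - 1) * u ^ (α - 1) := by
    refine intervalIntegral.integral_nonneg zero_le_one fun u hu => ?_
    exact mul_nonneg (Real.rpow_nonneg (by linarith [hu.2]) _) (Real.rpow_nonneg hu.1 _)
  refine ⟨_, hB0, fun t m γ hm hmt hγ => ?_⟩
  have ht : 0 < t := hm.trans_le hmt
  set ρ := m / t with hρdef
  have hρ : 0 < ρ := by positivity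
  have hρ1 : ρ ≤ 1 := (div_le_one ht).2 hmt
  obtain ⟨hi, he⟩ := beta_scaled (α / 2) α ρ (by positivity) hα hρ
  set c := t ^ α * ρ ^ (1 - α) * (γ * t) ^ (-(α / 2)) with hc
  have hc0 : 0 ≤ c := by positivity
  set f : ℝ → ℝ := fun u => c * ((ρ - u) ^ (α / 2 - 1) * u ^ (α - 1)) with hf
  have hfi : IntervalIntegrable f volume 0 ρ := hi.const_mul c
  refine ⟨Set.indicator (Set.Ioc 0 ρ) f, ?_, ?_, ?_⟩
  · rw [intervalIntegrable_iff_integrableOn_Ioc_of_le zero_le_one]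
    rw [intervalIntegrable_iff_integrableOn_Ioc_of_le hρ.le] at hfi
    exact (hfi.integrable_indicator measurableSet_Ioc).integrableOn
  · rw [intervalIntegral.integral_of_le zero_le_one, setIntegral_indicator measurableSet_Ioc,
      Set.inter_eq_self_of_subset_right (Set.Ioc_subset_Ioc_right hρ1),
      ← intervalIntegral.integral_of_le hρ.le, hf, intervalIntegral.integral_const_mul, he, ← mul_assoc,
      mul_comm]
    refine le_of_eq ?_
    congr 1
    rw [hc, hρdef, Real.mul_rpow hγ.le ht.le, Real.div_rpow hm.le ht.le, Real.div_rpow hm.le ht.le]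
    have e1 : m ^ (1 - α) * m ^ (α / 2 + α - 1) = m ^ (α / 2) := by
      rw [← Real.rpow_add hm]; congr 1; ring
    have e2 : t ^ (1 - α) * t ^ (α / 2 + α - 1) = t ^ (α / 2) := by
      rw [← Real.rpow_add ht]; congr 1; ring
    have e3 : t ^ α = t ^ (α / 2) * t ^ (α / 2) := by
      rw [← Real.rpow_add ht]; congr 1; ring
    rw [Real.rpow_neg ht.le, e3]
    have := Real.rpow_pos_of_pos ht (α / 2)
    calc _ = (t ^ (α / 2)) * (m ^ (1 - α) * m ^ (α / 2 + α - 1)) / (t ^ (1 - α) * t ^ (α / 2 + α - 1)) * γ ^ (-(α / 2)) := by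
          field_simp
      _ = _ := by rw [e1, e2]; field_simp
  · intro u hu
    constructor
    · refine Set.indicator_nonneg (fun u hu => ?_) u
      exact mul_nonneg hc0 (mul_nonneg (Real.rpow_nonneg (by linarith [hu.2]) _) (Real.rpow_nonneg hu.1.le _))
    · intro h
      have hu1 : u < ρ := by rw [hρdef, lt_div_iff₀ ht]; linarith
      have hmem : u ∈ Set.Ioc 0 ρ := ⟨hu.1, hu1.le⟩
      rw [Set.indicator_of_mem hmem]
      have hv : 0 < 1 - u := by linarith [hu.2]
      have hρu : 0 < ρ - u := by linarith
      have hmu : γ * (m - t * u) = γ * t * (ρ - u) := by rw [hρdef]; field_simp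
      have k1 : (1 - u) ^ (α - 1) ≤ (ρ - u) ^ (α - 1) * ρ ^ (1 - α) := by
        have : (ρ - u) ^ (α - 1) * ρ ^ (1 - α) = ((ρ - u) / ρ) ^ (α - 1) := by
          rw [Real.div_rpow hρu.le hρ.le, show (1 - α) = -(α - 1) by ring, Real.rpow_neg hρ.le, div_eq_mul_inv]
        rw [this]
        refine Real.rpow_le_rpow_of_nonpos (by positivity) ?_ (by linarith)
        rw [div_le_iff₀ hρ]
        nlinarith [hu.1]
      have k2 : Real.exp (-(γ * (m - t * u))) ≤ (γ * t) ^ (-(α / 2)) * (ρ - u) ^ (-(α / 2)) := by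
        rw [hmu, ← Real.mul_rpow (by positivity) hρu.le]
        exact exp_neg_le_rpow _ _ (by positivity) (by positivity) (by linarith)
      have k3 : (ρ - u) ^ (α / 2 - 1) = (ρ - u) ^ (α - 1) * (ρ - u) ^ (-(α / 2)) := by
        rw [← Real.rpow_add hρu]; congr 1; ring
      have hu2 : 0 ≤ u ^ (α - 1) := Real.rpow_nonneg hu.1.le _
      have hv2 : 0 ≤ (1 - u) ^ (α - 1) := Real.rpow_nonneg hv.le _
      have hv3 : 0 ≤ (ρ - u) ^ (α - 1) := Real.rpow_nonneg hρu.le _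
      simp only [hf]
      rw [k3]
      calc _ ≤ t ^ α * (((ρ - u) ^ (α - 1) * ρ ^ (1 - α)) * u ^ (α - 1)) * ((γ * t) ^ (-(α / 2)) * (ρ - u) ^ (-(α / 2))) := by
            gcongr
        _ = _ := by rw [hc]; ring
end B1


section B2
variable {V : Type*} [NormedAddCommGroup V] [NormedSpace ℝ V]

noncomputable def LL (α : ℝ) (K Q : ℝ → V →L[ℝ] V) (z : ℝ → V) (t : ℝ) : V :=
  t ^ α • ∫ u in (0:ℝ)..1, ((1 - u) ^ (α - 1) * u ^ (α - 1)) • K (t * (1 - u)) (Q (t * u) (z (t * u)))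

theorem LL_cont (α : ℝ) (hα : 0 < α) (K Q : ℝ → V →L[ℝ] V) (hK : Continuous K) (hQ : Continuous Q)
    (z : ℝ → V) (hz : Continuous z) : Continuous (LL α K Q z) := by
  unfold LL
  refine Continuous.smul (Real.continuous_rpow_const hα.le) ?_
  refine cont_param _ (beta_int α α hα hα) (fun t u => K (t * (1 - u)) (Q (t * u) (z (t * u)))) ?_
  simp only [Function.uncurry_def]
  fun_prop

theorem LL_sub (α : ℝ) (hα : 0 < α) (K Q : ℝ → V →L[ℝ] V) (hK : Continuous K) (hQ : Continuous Q)
    (z y : ℝ → V) (hz : Continuous z) (hy : Continuous y) (t : ℝ) :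
    LL α K Q (fun s => z s - y s) t = LL α K Q z t - LL α K Q y t := by
  unfold LL
  have h : ∀ z : ℝ → V, Continuous z → IntervalIntegrable (fun u : ℝ => ((1 - u) ^ (α - 1) * u ^ (α - 1)) •
      K (t * (1 - u)) (Q (t * u) (z (t * u)))) volume 0 1 := fun z hz =>
    (beta_int α α hα hα).smul_continuousOn (by fun_prop)
  rw [← smul_sub, ← intervalIntegral.integral_sub (h z hz) (h y hy)]
  simp only [map_sub, smul_sub]

theorem LL_contr (α : ℝ) (hα : 0 < α) (hα1 : α < 1) (K Q : ℝ → V →L[ℝ] V) (hQ : Continuous Q)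
    (C0 : ℝ) (hC0 : 0 ≤ C0) (hKb : ∀ r, 0 ≤ r → ‖K r‖ ≤ C0 / (1 + r ^ α) ^ 2)
    (hQ0 : Tendsto (fun t => ‖Q t‖) atTop (𝓝 0)) :
    ∃ T γ : ℝ, 0 < T ∧ 0 < γ ∧ ∀ (d : ℝ → V) (D : ℝ), 0 ≤ D →
      (∀ s, 0 ≤ s → Real.exp (-(γ * min s T)) * ‖d s‖ ≤ D) →
      ∀ t, 0 ≤ t → Real.exp (-(γ * min t T)) * ‖LL α K Q d t‖ ≤ 1 / 2 * D := by
  obtain ⟨M, hM, hM2⟩ := M_bound α hα hα1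
  obtain ⟨B, hB, hB2⟩ := B_bound α hα hα1
  set ε := 1 / (4 * (C0 * M + 1)) with hε
  have hε0 : 0 < ε := by positivity
  have hεM : C0 * ε * M ≤ 1 / 4 := by
    rw [hε, mul_one_div, div_mul_eq_mul_div, div_le_iff₀ (by positivity)]
    linarith
  obtain ⟨T, hT, hTe⟩ : ∃ T : ℝ, 0 < T ∧ ∀ s, T ≤ s → ‖Q s‖ ≤ ε := by
    obtain ⟨T, hT⟩ := eventually_atTop.1 (hQ0.eventually (ge_mem_nhds hε0))
    exact ⟨max T 1, by positivity, fun s hs => hT s ((le_max_left _ _).trans hs)⟩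
  obtain ⟨Q0, hQb⟩ := (isCompact_Icc (a := (0:ℝ)) (b := T)).exists_bound_of_continuousOn hQ.continuousOn
  have hQ00 : 0 ≤ Q0 := (norm_nonneg _).trans (hQb 0 (by simp [hT.le]))
  obtain ⟨γ, hγ, hγ2⟩ : ∃ γ : ℝ, 0 < γ ∧ C0 * Q0 * (B * (γ ^ (-(α / 2)) * T ^ (α / 2))) ≤ 1 / 4 := by
    have h1 : Tendsto (fun γ : ℝ => C0 * Q0 * (B * (γ ^ (-(α / 2)) * T ^ (α / 2)))) atTop
        (𝓝 (C0 * Q0 * (B * (0 * T ^ (α / 2))))) :=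
      (((tendsto_rpow_neg_atTop (by positivity)).mul_const _).const_mul _).const_mul _
    have h2 := h1.eventually (ge_mem_nhds (show C0 * Q0 * (B * (0 * T ^ (α / 2))) < 1 / 4 by norm_num))
    obtain ⟨γ, h3, h4⟩ := (h2.and (eventually_gt_atTop 0)).exists
    exact ⟨γ, h4, h3⟩
  refine ⟨T, γ, hT, hγ, fun d D hD hd t ht => ?_⟩
  rcases ht.eq_or_lt with rfl | ht
  · unfold LL
    rw [Real.zero_rpow hα.ne', zero_smul, norm_zero, mul_zero]; positivity
  set m := min t T with hm
  have hm0 : 0 < m := lt_min ht hT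
  obtain ⟨J1, hJ1, hJ1b, hJ1p⟩ := hM2 t ht.le
  obtain ⟨J2, hJ2, hJ2b, hJ2p⟩ := hB2 t m γ hm0 (min_le_left _ _) hγ
  have hfin : Real.exp (-(γ * m)) * ‖LL α K Q d t‖ ≤
      ∫ u in (0:ℝ)..1, (D * (C0 * ε) * J1 u + D * (C0 * Q0) * J2 u) := by
    have h1 : Real.exp (-(γ * m)) * ‖LL α K Q d t‖ = ‖∫ u in (0:ℝ)..1, (Real.exp (-(γ * m)) * t ^ α) •
        (((1 - u) ^ (α - 1) * u ^ (α - 1)) • K (t * (1 - u)) (Q (t * u) (d (t * u))))‖ := by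
      rw [intervalIntegral.integral_smul, mul_smul, norm_smul, Real.norm_of_nonneg (Real.exp_pos _).le]
      rfl
    rw [h1]
    refine intervalIntegral.norm_integral_le_of_norm_le zero_le_one ?_ ((hJ1.const_mul _).add (hJ2.const_mul _))
    have hne : ∀ᵐ u : ℝ, u ≠ 1 := by simp [ae_iff]
    filter_upwards [hne] with u hu1 hu
    have hu' : u ∈ Set.Ioo (0:ℝ) 1 := ⟨hu.1, lt_of_le_of_ne hu.2 hu1⟩
    have hj1 := hJ1p u hu'
    obtain ⟨hj20, hj2⟩ := hJ2p u hu'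
    have hv : 0 < 1 - u := by linarith [hu'.2]
    have hu0 := hu'.1
    set p := (1 - u) ^ (α - 1) * u ^ (α - 1) with hp
    have hp0 : 0 ≤ p := mul_nonneg (Real.rpow_nonneg hv.le _) (Real.rpow_nonneg hu.1.le _)
    have hta : 0 ≤ t ^ α := Real.rpow_nonneg ht.le _
    have hk := hKb (t * (1 - u)) (by positivity)
    have hx : 0 ≤ (t * (1 - u)) ^ α := by positivity
    set x := (1 + (t * (1 - u)) ^ α) ^ 2 with hxd
    have hx1 : 1 ≤ x := by rw [hxd]; nlinarith
    have hx0 : 0 < x := by linarith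
    have hj10 : 0 ≤ J1 u := le_trans (by positivity) hj1
    have hd' := hd (t * u) (by positivity)
    have hd2 : ‖d (t * u)‖ ≤ D * Real.exp (γ * min (t * u) T) := by
      rw [Real.exp_neg, inv_mul_le_iff₀ (Real.exp_pos _)] at hd'
      linarith
    have hn : ‖(Real.exp (-(γ * m)) * t ^ α) • p • K (t * (1 - u)) (Q (t * u) (d (t * u)))‖
        ≤ (Real.exp (-(γ * m)) * t ^ α) * (p * (C0 / x * (‖Q (t * u)‖ * (D * Real.exp (γ * min (t * u) T))))) := by
      rw [norm_smul, norm_smul, Real.norm_of_nonneg (by positivity), Real.norm_of_nonneg hp0]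
      gcongr
      refine (ContinuousLinearMap.le_opNorm _ _).trans ?_
      gcongr
      refine (ContinuousLinearMap.le_opNorm _ _).trans ?_
      gcongr
    refine hn.trans ?_
    rcases lt_or_ge (t * u) m with h | h
    · have hsT : t * u ≤ T := h.le.trans (min_le_right _ _)
      rw [min_eq_left hsT]
      have hq := hQb (t * u) ⟨by positivity, hsT⟩
      have he : Real.exp (-(γ * (m - t * u))) = Real.exp (-(γ * m)) * Real.exp (γ * (t * u)) := by
        rw [← Real.exp_add]; congr 1; ring
      have hj := hj2 h
      have hcx : C0 / x ≤ C0 := div_le_self hC0 hx1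
      calc _ ≤ (Real.exp (-(γ * m)) * t ^ α) * (p * (C0 * (Q0 * (D * Real.exp (γ * (t * u)))))) := by gcongr
        _ = D * (C0 * Q0) * (t ^ α * p * Real.exp (-(γ * (m - t * u)))) := by rw [he]; ring
        _ ≤ D * (C0 * Q0) * J2 u := by gcongr
        _ ≤ _ := by
          have : 0 ≤ D * (C0 * ε) * J1 u := by positivity
          linarith
    · have hmT : m = T := by
        rcases le_total t T with h' | h'
        · rw [hm, min_eq_left h'] at h
          nlinarith [hu'.2]
        · rw [hm, min_eq_right h']
      rw [hmT] at h ⊢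
      rw [min_eq_right h]
      have hq := hTe _ h
      calc _ ≤ (Real.exp (-(γ * T)) * t ^ α) * (p * (C0 / x * (ε * (D * Real.exp (γ * T))))) := by gcongr
        _ = D * (C0 * ε) * (t ^ α * p / x) := by rw [Real.exp_neg]; field_simp
        _ ≤ D * (C0 * ε) * J1 u := by gcongr
        _ ≤ _ := by
          have : 0 ≤ D * (C0 * Q0) * J2 u := by positivity
          linarith
  refine hfin.trans ?_
  rw [intervalIntegral.integral_add (hJ1.const_mul _) (hJ2.const_mul _), intervalIntegral.integral_const_mul,
    intervalIntegral.integral_const_mul]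
  have hmT : m ^ (α / 2) ≤ T ^ (α / 2) := Real.rpow_le_rpow hm0.le (min_le_right _ _) (by positivity)
  have hg0 : 0 ≤ γ ^ (-(α / 2)) := Real.rpow_nonneg hγ.le _
  calc _ ≤ D * (C0 * ε) * M + D * (C0 * Q0) * (B * (γ ^ (-(α / 2)) * T ^ (α / 2))) := by
        gcongr
        refine hJ2b.trans ?_
        gcongr
    _ = D * (C0 * ε * M) + D * (C0 * Q0 * (B * (γ ^ (-(α / 2)) * T ^ (α / 2)))) := by ring
    _ ≤ D * (1 / 4) + D * (1 / 4) := by gcongr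
    _ = _ := by ring

theorem fixed_point [CompleteSpace V] (α : ℝ) (hα : 0 < α) (hα1 : α < 1) (K Q : ℝ → V →L[ℝ] V)
    (hK : Continuous K) (hQ : Continuous Q)
    (C0 : ℝ) (hC0 : 0 ≤ C0) (hKb : ∀ r, 0 ≤ r → ‖K r‖ ≤ C0 / (1 + r ^ α) ^ 2)
    (hQ0 : Tendsto (fun t => ‖Q t‖) atTop (𝓝 0))
    (h : ℝ → V) (hh : Continuous h) (hhb : ∃ C, ∀ t, 0 ≤ t → ‖h t‖ ≤ C) :
    ∃ z : ℝ → V, Continuous z ∧ (∃ C, ∀ t, 0 ≤ t → ‖z t‖ ≤ C) ∧ (∀ t, 0 ≤ t → z t = h t + LL α K Q z t) ∧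
      ∀ y : ℝ → V, Continuous y → (∃ C, ∀ t, 0 ≤ t → ‖y t‖ ≤ C) →
        (∀ t, 0 ≤ t → y t = h t + LL α K Q y t) → ∀ t, 0 ≤ t → y t = z t := by
  obtain ⟨T, γ, hT, hγ, hcon⟩ := LL_contr α hα hα1 K Q hQ C0 hC0 hKb hQ0
  obtain ⟨Ch, hCh⟩ := hhb
  set w : ℝ → ℝ := fun t => Real.exp (-(γ * min t T)) with hw
  have hwc : Continuous w := by rw [hw]; fun_prop
  have hw0 : ∀ t, 0 < w t := fun t => Real.exp_pos _
  have hw1 : ∀ t, 0 ≤ t → w t ≤ 1 := fun t ht => by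
    rw [hw]; simp only [Real.exp_le_one_iff]
    have : 0 ≤ min t T := le_min ht hT.le
    nlinarith
  have hwT : ∀ t, Real.exp (-(γ * T)) ≤ w t := fun t => by
    rw [hw]; simp only [Real.exp_le_exp]
    have : min t T ≤ T := min_le_right _ _
    nlinarith
  have hwz : ∀ (y : ℝ → V), Continuous y → Continuous fun s => (w s)⁻¹ • y s := fun y hy =>
    (hwc.inv₀ (fun t => (hw0 t).ne')).smul hy
  have hnorm0 : ∀ (y : BoundedContinuousFunction ℝ V) s, w s * ‖(w s)⁻¹ • y s‖ ≤ ‖y‖ := fun y s => by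
    rw [norm_smul, norm_inv, Real.norm_of_nonneg (hw0 s).le, mul_inv_cancel_left₀ (hw0 s).ne']
    exact y.norm_coe_le_norm s
  let F : BoundedContinuousFunction ℝ V → BoundedContinuousFunction ℝ V := fun y =>
    BoundedContinuousFunction.ofNormedAddCommGroup
      (fun t => w (max t 0) • (h (max t 0) + LL α K Q (fun s => (w s)⁻¹ • y s) (max t 0)))
      (by
        have h1 := LL_cont α hα K Q hK hQ _ (hwz y y.continuous)
        have hm : Continuous fun t : ℝ => max t 0 := by fun_prop
        exact (hwc.comp hm).smul ((hh.comp hm).add (h1.comp hm)))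
      (Ch + 1 / 2 * ‖y‖)
      (by
        intro t
        have ht : 0 ≤ max t 0 := le_max_right _ _
        have h1 := hcon (fun s => (w s)⁻¹ • y s) ‖y‖ (norm_nonneg _) (fun s _ => hnorm0 y s) _ ht
        rw [norm_smul, Real.norm_of_nonneg (hw0 _).le]
        have h2 := hCh _ ht
        have h3 := norm_add_le (h (max t 0)) (LL α K Q (fun s => (w s)⁻¹ • y s) (max t 0))
        have h4 := hw0 (max t 0)
        have h5 := hw1 _ ht
        calc _ ≤ w (max t 0) * (‖h (max t 0)‖ + ‖LL α K Q (fun s => (w s)⁻¹ • y s) (max t 0)‖) := by gcongr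
          _ = w (max t 0) * ‖h (max t 0)‖ + w (max t 0) * ‖LL α K Q (fun s => (w s)⁻¹ • y s) (max t 0)‖ := by ring
          _ ≤ 1 * ‖h (max t 0)‖ + 1 / 2 * ‖y‖ := by gcongr
          _ ≤ _ := by linarith)
  have hF : ∀ y t, F y t = w (max t 0) • (h (max t 0) + LL α K Q (fun s => (w s)⁻¹ • y s) (max t 0)) :=
    fun y t => rfl
  have hFc : ContractingWith (1 / 2) F := by
    refine ⟨by rw [← NNReal.coe_lt_coe]; norm_num, LipschitzWith.of_dist_le_mul fun y1 y2 => ?_⟩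
    rw [dist_eq_norm, dist_eq_norm, BoundedContinuousFunction.norm_le (by positivity)]
    intro t
    have ht : 0 ≤ max t 0 := le_max_right _ _
    have h1 := hcon (fun s => (w s)⁻¹ • (y1 - y2) s) ‖y1 - y2‖ (norm_nonneg _) (fun s _ => hnorm0 _ s) _ ht
    have h2 : (fun s => (w s)⁻¹ • (y1 - y2) s) = fun s => (w s)⁻¹ • y1 s - (w s)⁻¹ • y2 s := by
      funext s; simp [smul_sub]
    rw [h2, LL_sub α hα K Q hK hQ _ _ (hwz y1 y1.continuous) (hwz y2 y2.continuous)] at h1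
    rw [BoundedContinuousFunction.sub_apply, hF, hF, ← smul_sub, add_sub_add_left_eq_sub, norm_smul,
      Real.norm_of_nonneg (hw0 _).le]
    simpa using h1
  obtain ⟨y, hy⟩ : ∃ y, F y = y := ⟨_, hFc.fixedPoint_isFixedPt⟩
  have hcancel : ∀ s (v : V), (w s)⁻¹ • w s • v = v := fun s v => inv_smul_smul₀ (hw0 s).ne' v
  refine ⟨fun s => (w s)⁻¹ • y s, hwz y y.continuous, ⟨Real.exp (γ * T) * ‖y‖, fun t ht => ?_⟩, ?_, ?_⟩
  · have h1 := hnorm0 y t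
    have h2 := hwT t
    have h3 : Real.exp (-(γ * T)) * ‖(w t)⁻¹ • y t‖ ≤ ‖y‖ := le_trans (by gcongr) h1
    rwa [Real.exp_neg, inv_mul_le_iff₀ (Real.exp_pos _)] at h3
  · intro t ht
    have h1 := hF y t
    rw [hy, max_eq_left ht] at h1
    show (w t)⁻¹ • y t = _
    rw [h1, hcancel]
  · rintro x hx ⟨C, hC⟩ hxe t ht
    have hxm : ∀ t : ℝ, 0 ≤ t → max t 0 = t := fun t ht => max_eq_left ht
    let Y : BoundedContinuousFunction ℝ V := BoundedContinuousFunction.ofNormedAddCommGroup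
      (fun t => w (max t 0) • x (max t 0))
      (by
        have hm : Continuous fun t : ℝ => max t 0 := by fun_prop
        exact (hwc.comp hm).smul (hx.comp hm)) C
      (by
        intro t
        have ht : 0 ≤ max t 0 := le_max_right _ _
        rw [norm_smul, Real.norm_of_nonneg (hw0 _).le]
        exact (mul_le_of_le_one_left (norm_nonneg _) (hw1 _ ht)).trans (hC _ ht))
    have hYa : ∀ t, Y t = w (max t 0) • x (max t 0) := fun t => rfl
    have hYF : F Y = Y := by
      ext1 t
      have ht : 0 ≤ max t 0 := le_max_right _ _
      rw [hF, hYa, hxe _ ht]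
      congr 2
      unfold LL
      congr 1
      refine intervalIntegral.integral_congr fun u hu => ?_
      rw [Set.uIcc_of_le zero_le_one] at hu
      have h0 : 0 ≤ max t 0 * u := mul_nonneg ht hu.1
      beta_reduce
      rw [hYa, hxm _ h0, hcancel]
    have hYy : Y = y := (hFc.fixedPoint_unique hYF).trans (hFc.fixedPoint_unique hy).symm
    show x t = (w t)⁻¹ • y t
    rw [← hYy, hYa, hxm t ht, hcancel]
end B2


section B0
attribute [local instance] Matrix.linftyOpNormedAlgebra

theorem ml_coeff_real (α : ℝ) (hα : 0 < α) (R : ℝ) (hR : 0 ≤ R) :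
    Summable fun k : ℕ => ‖(Real.Gamma (α * k + α))⁻¹‖ * R ^ k := by
  refine (summable_ml α hα R hR).congr fun k => ?_
  rw [Real.norm_of_nonneg (inv_nonneg.2 (gamma_pos_ml α hα k).le)]

theorem continuous_ML (s : ℕ) (α : ℝ) (hα : 0 < α) :
    Continuous fun B : Matrix (Fin s) (Fin s) ℝ => ML α α B :=
  continuous_powser (fun k : ℕ => (Real.Gamma (α * k + α))⁻¹) (ml_coeff_real α hα)

theorem norm_map_ofReal {s : ℕ} (B : Matrix (Fin s) (Fin s) ℝ) :
    ‖B.map (algebraMap ℝ ℂ)‖ = ‖B‖ := by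
  rw [Matrix.linfty_opNorm_def, Matrix.linfty_opNorm_def]
  congr 1
  refine Finset.sup_congr rfl fun i _ => Finset.sum_congr rfl fun j _ => ?_
  simp [Matrix.map_apply]

theorem map_ML {s : ℕ} (α : ℝ) (hα : 0 < α) (B : Matrix (Fin s) (Fin s) ℝ) :
    (ML α α B).map (algebraMap ℝ ℂ) = mlC α (B.map (algebraMap ℝ ℂ)) := by
  have hs : Summable fun k : ℕ => (Real.Gamma (α * k + α))⁻¹ • B ^ k :=
    (summable_powser (fun k : ℕ => (Real.Gamma (α * k + α))⁻¹) (ml_coeff_real α hα) B).of_norm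
  have hc : Continuous ((algebraMap ℝ ℂ).mapMatrix : Matrix (Fin s) (Fin s) ℝ →+* Matrix (Fin s) (Fin s) ℂ) := by
    refine continuous_matrix fun i j => ?_
    simp only [RingHom.mapMatrix_apply, Matrix.map_apply]
    exact Complex.continuous_ofReal.comp (continuous_id.matrix_elem i j)
  have := hs.hasSum.map (algebraMap ℝ ℂ).mapMatrix hc
  have h2 := this.tsum_eq
  unfold mlC ML
  rw [← RingHom.mapMatrix_apply, ← h2]
  congr 1
  funext k
  simp only [Function.comp]
  have : (algebraMap ℝ ℂ).mapMatrix B ^ k = (algebraMap ℝ ℂ).mapMatrix (B ^ k) := by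
    rw [map_pow]
  rw [← RingHom.mapMatrix_apply, this]
  ext i j
  simp

theorem E_cont (s : ℕ) (α : ℝ) (hα : 0 < α) (A : Matrix (Fin s) (Fin s) ℝ) :
    Continuous fun r : ℝ => ML α α (r ^ α • A) := by
  refine (continuous_ML s α hα).comp ?_
  refine Continuous.smul (f := fun r : ℝ => r ^ α) ?_ (continuous_const (y := A))
  exact Real.continuous_rpow_const hα.le

theorem E_bound (s : ℕ) (α : ℝ) (hα : 0 < α) (hα1 : α < 1) (A : Matrix (Fin s) (Fin s) ℝ)
    (hspec : ∀ μ ∈ spectrum ℂ (A.map (algebraMap ℝ ℂ)),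
      μ ≠ 0 ∧ α * Real.pi / 2 < |Complex.arg μ|) :
    ∃ C, 0 ≤ C ∧ ∀ r, 0 ≤ r → ‖ML α α (r ^ α • A)‖ ≤ C / (1 + r ^ α) ^ 2 := by
  obtain ⟨C1, hC1, h1⟩ := mlC_decay α hα hα1 (A.map (algebraMap ℝ ℂ)) hspec
  obtain ⟨C2, h2⟩ := (isCompact_Icc (a := (0:ℝ)) (b := 1)).exists_bound_of_continuousOn
    (E_cont s α hα A).continuousOn
  have hC2 : 0 ≤ C2 := (norm_nonneg _).trans (h2 0 (by simp))
  refine ⟨4 * C1 + 4 * C2, by positivity, fun r hr => ?_⟩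
  have hra : 0 ≤ r ^ α := Real.rpow_nonneg hr _
  rw [le_div_iff₀ (by positivity)]
  rcases le_total r 1 with h | h
  · have := h2 r ⟨hr, h⟩
    have h3 : r ^ α ≤ 1 := Real.rpow_le_one hr h hα.le
    have h4 : (1 + r ^ α) ^ 2 ≤ 4 := by nlinarith
    calc _ ≤ C2 * 4 := by gcongr
      _ ≤ _ := by linarith
  · have hr0 : 0 < r := by linarith
    have h3 := h1 r hr0
    have h4 : ((r ^ α : ℝ) : ℂ) • A.map (algebraMap ℝ ℂ) = (r ^ α • A).map (algebraMap ℝ ℂ) := by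
      ext i j; simp
    rw [h4, ← map_ML α hα, norm_map_ofReal] at h3
    have h5 : 1 ≤ r ^ α := Real.one_le_rpow h hα.le
    have h6 : r ^ (-(2 * α)) = ((r ^ α) ^ 2)⁻¹ := by
      rw [Real.rpow_neg hr, mul_comm, Real.rpow_mul hr]; norm_cast
    rw [h6] at h3
    calc _ ≤ C1 * ((r ^ α) ^ 2)⁻¹ * (1 + r ^ α) ^ 2 := by gcongr
      _ ≤ C1 * ((r ^ α) ^ 2)⁻¹ * (4 * (r ^ α) ^ 2) := by gcongr; nlinarith
      _ = 4 * C1 := by field_simp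
      _ ≤ _ := by linarith
end B0


section B3
variable {V : Type*} [NormedAddCommGroup V] [NormedSpace ℝ V]

noncomputable def RR (α : ℝ) (K Q : ℝ → V →L[ℝ] V) (g : ℝ → V) (x₀ : V) (φ : ℝ → V) (t : ℝ) : V :=
  t ^ (α - 1) • K t x₀ + (∫ τ in (0:ℝ)..t, (t - τ) ^ (α - 1) • K (t - τ) (Q τ (φ τ)))
    + ∫ τ in (0:ℝ)..t, (t - τ) ^ (α - 1) • K (t - τ) (g τ)

noncomputable def hG (α : ℝ) (K : ℝ → V →L[ℝ] V) (g : ℝ → V) (x₀ : V) (t : ℝ) : V :=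
  K t x₀ + t • ∫ u in (0:ℝ)..1, (1 - u) ^ (α - 1) • K (t * (1 - u)) (g (t * u))

theorem rpow_cancel (α t : ℝ) (ht : 0 < t) : t ^ (1 - α) * t ^ (α - 1) = 1 := by
  rw [← Real.rpow_add ht]; simp

theorem subst_int (α : ℝ) (t : ℝ) (ht : 0 < t) (f : ℝ → V) :
    t ^ (1 - α) • ∫ τ in (0:ℝ)..t, (t - τ) ^ (α - 1) • f τ =
      t • ∫ u in (0:ℝ)..1, (1 - u) ^ (α - 1) • f (t * u) := by
  have h := intervalIntegral.smul_integral_comp_mul_left (a := 0) (b := 1)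
    (fun τ => (t - τ) ^ (α - 1) • f τ) t
  rw [mul_zero, mul_one] at h
  rw [← h, smul_comm, ← intervalIntegral.integral_smul]
  congr 1
  refine intervalIntegral.integral_congr fun u hu => ?_
  rw [Set.uIcc_of_le zero_le_one] at hu
  beta_reduce
  rw [show t - t * u = t * (1 - u) by ring, Real.mul_rpow ht.le (by linarith [hu.2]), smul_smul,
    ← mul_assoc, rpow_cancel α t ht, one_mul]

theorem RR_eq (α : ℝ) (K Q : ℝ → V →L[ℝ] V) (g : ℝ → V) (x₀ : V) (φ z : ℝ → V)
    (hz : ∀ s, 0 < s → z s = s ^ (1 - α) • φ s) (t : ℝ) (ht : 0 < t) :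
    t ^ (1 - α) • RR α K Q g x₀ φ t = hG α K g x₀ t + LL α K Q z t := by
  unfold RR hG LL
  rw [smul_add, smul_add, subst_int α t ht, subst_int α t ht, smul_smul, rpow_cancel α t ht, one_smul,
    add_right_comm]
  have : ∀ u ∈ Set.Ioc (0:ℝ) 1, t • (1 - u) ^ (α - 1) • K (t - t * u) (Q (t * u) (φ (t * u))) =
      t ^ α • ((1 - u) ^ (α - 1) * u ^ (α - 1)) • K (t * (1 - u)) (Q (t * u) (z (t * u))) := by
    intro u hu
    have htu : 0 < t * u := mul_pos ht hu.1
    rw [hz _ htu, map_smul, map_smul, show t - t * u = t * (1 - u) by ring]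
    simp only [smul_smul]
    congr 1
    have h1 : (t * u) ^ (1 - α) * (t * u) ^ (α - 1) = 1 := rpow_cancel α _ htu
    have h2 : (t * u) ^ (α - 1) = t ^ (α - 1) * u ^ (α - 1) := Real.mul_rpow ht.le hu.1.le
    have h3 : t ^ α = t * t ^ (α - 1) := by
      rw [mul_comm, ← Real.rpow_add_one ht.ne']; congr 1; ring
    rw [h3]
    calc t * (1 - u) ^ (α - 1) = t * (1 - u) ^ (α - 1) * ((t * u) ^ (1 - α) * (t * u) ^ (α - 1)) := by
          rw [h1, mul_one]
      _ = _ := by rw [h2]; ring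
  have e : ∀ F G : ℝ → V, (∀ u ∈ Set.Ioc (0:ℝ) 1, F u = G u) →
      ∫ u in (0:ℝ)..1, F u = ∫ u in (0:ℝ)..1, G u := fun F G hFG => by
    refine intervalIntegral.integral_congr_ae (Eventually.of_forall fun u hu => ?_)
    rw [Set.uIoc_of_le zero_le_one] at hu
    exact hFG u hu
  have e2 : (t • ∫ u in (0:ℝ)..1, (1 - u) ^ (α - 1) • K (t - t * u) (Q (t * u) (φ (t * u)))) =
      t ^ α • ∫ u in (0:ℝ)..1, ((1 - u) ^ (α - 1) * u ^ (α - 1)) • K (t * (1 - u)) (Q (t * u) (z (t * u))) := by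
    rw [← intervalIntegral.integral_smul, ← intervalIntegral.integral_smul]
    exact e _ _ this
  rw [e2]
  congr 4
  funext u
  rw [show t - t * u = t * (1 - u) by ring]

theorem hG_cont (α : ℝ) (hα : 0 < α) (K : ℝ → V →L[ℝ] V) (hK : Continuous K) (g : ℝ → V)
    (hg : Continuous g) (x₀ : V) : Continuous (hG α K g x₀) := by
  unfold hG
  have h0 := beta_int α 1 hα one_pos
  simp only [sub_self, Real.rpow_zero, mul_one] at h0
  have h1 := cont_param _ h0 (fun t u => K (t * (1 - u)) (g (t * u)))
    (by simp only [Function.uncurry_def]; fun_prop)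
  exact (hK.clm_apply continuous_const).add (continuous_id.smul h1)

theorem hG_bdd (α : ℝ) (hα : 0 < α) (K : ℝ → V →L[ℝ] V) (C0 : ℝ) (hC0 : 0 ≤ C0)
    (hKb : ∀ r, 0 ≤ r → ‖K r‖ ≤ C0 / (1 + r ^ α) ^ 2) (g : ℝ → V) (x₀ : V)
    (hg : ∃ C : ℝ, ∀ t : ℝ, 0 ≤ t → t ^ (1 - α) * ∫ τ in (0:ℝ)..t, (t - τ) ^ (α - 1) * ‖K (t - τ) (g τ)‖ ≤ C) :
    ∃ C, ∀ t, 0 ≤ t → ‖hG α K g x₀ t‖ ≤ C := by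
  obtain ⟨C, hC⟩ := hg
  refine ⟨C0 * ‖x₀‖ + |C|, fun t ht => ?_⟩
  unfold hG
  refine (norm_add_le _ _).trans (add_le_add ?_ ?_)
  · refine (ContinuousLinearMap.le_opNorm _ _).trans ?_
    gcongr
    refine (hKb t ht).trans (div_le_self hC0 ?_)
    have := Real.rpow_nonneg ht α
    nlinarith
  · rcases ht.eq_or_lt with rfl | ht
    · simp
    · have h := subst_int α t ht (fun τ => K (t - τ) (g τ))
      have h2 : ∀ u : ℝ, K (t - t * u) = K (t * (1 - u)) := fun u => by congr 1; ring
      simp only [h2] at h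
      rw [← h, norm_smul, Real.norm_of_nonneg (Real.rpow_nonneg ht.le _)]
      refine le_trans ?_ ((hC t ht.le).trans (le_abs_self C))
      gcongr
      refine (intervalIntegral.norm_integral_le_integral_norm ht.le).trans (le_of_eq ?_)
      refine intervalIntegral.integral_congr fun τ hτ => ?_
      rw [Set.uIcc_of_le ht.le] at hτ
      beta_reduce
      rw [norm_smul, Real.norm_of_nonneg (Real.rpow_nonneg (by linarith [hτ.2]) _)]

theorem ext_cont (Z : ℝ → V) (l : V) (hZ : ContinuousOn Z (Set.Ioi 0)) (hl : Tendsto Z (𝓝[>] 0) (𝓝 l)) :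
    Continuous fun t : ℝ => if t ≤ 0 then l else Z t := by
  rw [continuous_iff_continuousAt]
  intro t
  rcases lt_trichotomy t 0 with h | rfl | h
  · refine (continuousAt_const (y := l)).congr ?_
    filter_upwards [Iio_mem_nhds h] with s hs
    rw [if_pos (le_of_lt hs)]
  · unfold ContinuousAt
    beta_reduce
    rw [← nhdsLE_sup_nhdsGT, if_pos le_rfl, tendsto_sup]
    constructor
    · refine (tendsto_const_nhds (x := l)).congr' ?_
      filter_upwards [self_mem_nhdsWithin] with s hs
      rw [if_pos (Set.mem_Iic.1 hs)]
    · refine hl.congr' ?_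
      filter_upwards [self_mem_nhdsWithin] with s hs
      rw [if_neg (not_le.2 hs)]
  · refine (hZ.continuousAt (Ioi_mem_nhds h)).congr ?_
    filter_upwards [Ioi_mem_nhds h] with s hs
    rw [if_neg (not_le.2 hs)]

theorem main_abs [CompleteSpace V] (α : ℝ) (hα : 0 < α) (hα1 : α < 1) (K Q : ℝ → V →L[ℝ] V)
    (hK : Continuous K) (hQ : Continuous Q)
    (C0 : ℝ) (hC0 : 0 ≤ C0) (hKb : ∀ r, 0 ≤ r → ‖K r‖ ≤ C0 / (1 + r ^ α) ^ 2)
    (hQ0 : Tendsto (fun t => ‖Q t‖) atTop (𝓝 0)) (g : ℝ → V) (hgc : Continuous g)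
    (hg : ∃ C : ℝ, ∀ t : ℝ, 0 ≤ t → t ^ (1 - α) * ∫ τ in (0:ℝ)..t, (t - τ) ^ (α - 1) * ‖K (t - τ) (g τ)‖ ≤ C)
    (x₀ : V) :
    ∃ φ : ℝ → V, (ContinuousOn φ (Set.Ioi 0) ∧
      (∃ l : V, Tendsto (fun t : ℝ => t ^ (1 - α) • φ t) (𝓝[>] 0) (𝓝 l)) ∧
      (∃ C : ℝ, ∀ t : ℝ, 0 ≤ t → t ^ (1 - α) * ‖φ t‖ ≤ C)) ∧
      (∀ t > (0:ℝ), φ t = RR α K Q g x₀ φ t) ∧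
      (∀ ψ : ℝ → V, (ContinuousOn ψ (Set.Ioi 0) ∧
        (∃ l : V, Tendsto (fun t : ℝ => t ^ (1 - α) • ψ t) (𝓝[>] 0) (𝓝 l)) ∧
        (∃ C : ℝ, ∀ t : ℝ, 0 ≤ t → t ^ (1 - α) * ‖ψ t‖ ≤ C)) →
        (∀ t > (0:ℝ), ψ t = RR α K Q g x₀ ψ t) → ∀ t > (0:ℝ), ψ t = φ t) ∧
      Tendsto φ atTop (𝓝 0) := by
  have hhc := hG_cont α hα K hK g hgc x₀
  obtain ⟨z, hzc, ⟨C, hC⟩, hzf, huniq⟩ := fixed_point α hα hα1 K Q hK hQ C0 hC0 hKb hQ0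
    (hG α K g x₀) hhc (hG_bdd α hα K C0 hC0 hKb g x₀ hg)
  have hC0' : 0 ≤ C := (norm_nonneg _).trans (hC 0 le_rfl)
  have hzφ : ∀ s, 0 < s → z s = s ^ (1 - α) • (s ^ (α - 1) • z s) := fun s hs => by
    rw [smul_smul, rpow_cancel α s hs, one_smul]
  have hinj : ∀ t : ℝ, 0 < t → ∀ a b : V, t ^ (1 - α) • a = t ^ (1 - α) • b → a = b := fun t ht a b hab =>
    smul_right_injective V (Real.rpow_pos_of_pos ht (1 - α)).ne' hab
  refine ⟨fun t => t ^ (α - 1) • z t, ⟨?_, ⟨z 0, ?_⟩, C, ?_⟩, ?_, ?_, ?_⟩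
  · refine ContinuousOn.smul (fun t ht => ?_) hzc.continuousOn
    exact (Real.continuousAt_rpow_const t (α - 1) (Or.inl (ne_of_gt ht))).continuousWithinAt
  · refine (hzc.continuousWithinAt (s := Set.Ioi 0)).tendsto.congr' ?_
    filter_upwards [self_mem_nhdsWithin] with s hs
    exact hzφ s hs
  · intro t ht
    rcases ht.eq_or_lt with rfl | ht
    · rw [Real.zero_rpow (by linarith), zero_mul]; exact hC0'
    · have := hC t ht.le
      rw [hzφ t ht, norm_smul, Real.norm_of_nonneg (Real.rpow_nonneg ht.le _)] at this
      exact this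
  · intro t ht
    refine hinj t ht _ _ ?_
    rw [RR_eq α K Q g x₀ _ z hzφ t ht, ← hzf t ht.le, ← hzφ t ht]
  · rintro ψ ⟨hψc, ⟨l, hl⟩, Cψ, hCψ⟩ hψ t ht
    set y : ℝ → V := fun t => if t ≤ 0 then l else t ^ (1 - α) • ψ t with hy
    have hyp : ∀ s, 0 < s → y s = s ^ (1 - α) • ψ s := fun s hs => if_neg (not_le.2 hs)
    have hyc : Continuous y := by
      refine ext_cont (fun t => t ^ (1 - α) • ψ t) l (ContinuousOn.smul ?_ hψc) hl
      exact (Real.continuous_rpow_const (by linarith)).continuousOn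
    have hyf : ∀ t, 0 < t → y t = hG α K g x₀ t + LL α K Q y t := fun t ht => by
      rw [← RR_eq α K Q g x₀ ψ y hyp t ht, ← hψ t ht, hyp t ht]
    have hyf0 : y 0 = hG α K g x₀ 0 + LL α K Q y 0 := by
      have h1 : Tendsto y (𝓝[>] 0) (𝓝 (y 0)) := hyc.continuousWithinAt
      have h2 : Tendsto (fun t => hG α K g x₀ t + LL α K Q y t) (𝓝[>] 0) (𝓝 (hG α K g x₀ 0 + LL α K Q y 0)) :=
        (hhc.add (LL_cont α hα K Q hK hQ y hyc)).continuousWithinAt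
      refine tendsto_nhds_unique h1 (h2.congr' ?_)
      filter_upwards [self_mem_nhdsWithin] with s hs
      exact (hyf s hs).symm
    have hyb : ∃ C, ∀ t, 0 ≤ t → ‖y t‖ ≤ C := by
      refine ⟨max ‖l‖ Cψ, fun t ht => ?_⟩
      rcases ht.eq_or_lt with rfl | ht
      · simp [hy]
      · rw [hyp t ht, norm_smul, Real.norm_of_nonneg (Real.rpow_nonneg ht.le _)]
        exact (hCψ t ht.le).trans (le_max_right _ _)
    have := huniq y hyc hyb (fun t ht => by
      rcases ht.eq_or_lt with rfl | ht
      · exact hyf0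
      · exact hyf t ht) t ht.le
    refine hinj t ht _ _ ?_
    rw [← hzφ t ht, ← this, hyp t ht]
  · have h1 : Tendsto (fun t : ℝ => t ^ (-(1 - α)) * C) atTop (𝓝 (0 * C)) :=
      (tendsto_rpow_neg_atTop (by linarith)).mul_const C
    rw [zero_mul] at h1
    refine squeeze_zero_norm' ?_ h1
    filter_upwards [eventually_gt_atTop 0] with t ht
    rw [norm_smul, Real.norm_of_nonneg (Real.rpow_nonneg ht.le _), neg_sub]
    have := hC t ht.le
    have := Real.rpow_nonneg ht.le (α - 1)
    gcongr
end B3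

noncomputable def cl (s : ℕ) : Matrix (Fin s) (Fin s) ℝ →ₗ[ℝ] ((Fin s → ℝ) →L[ℝ] (Fin s → ℝ)) :=
  (LinearMap.toContinuousLinearMap : ((Fin s → ℝ) →ₗ[ℝ] (Fin s → ℝ)) ≃ₗ[ℝ] _).toLinearMap ∘ₗ
    (Matrix.toLin' : Matrix (Fin s) (Fin s) ℝ ≃ₗ[ℝ] _).toLinearMap

theorem cl_apply (s : ℕ) (M : Matrix (Fin s) (Fin s) ℝ) (v : Fin s → ℝ) : cl s M v = M.mulVec v := by
  simp [cl]

theorem cl_norm (s : ℕ) (M : Matrix (Fin s) (Fin s) ℝ) : ‖cl s M‖ ≤ ‖M‖ := by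
  refine ContinuousLinearMap.opNorm_le_bound _ (norm_nonneg _) fun v => ?_
  rw [cl_apply]
  exact Matrix.linfty_opNorm_mulVec M v

theorem cl_cont (s : ℕ) : Continuous (cl s) := LinearMap.continuous_of_finiteDimensional _


theorem stmt13 (α : ℝ) (hα0 : 0 < α) (hα1 : α < 1) (s : ℕ)
    (A : Matrix (Fin s) (Fin s) ℝ)
    (hspec : ∀ μ ∈ spectrum ℂ (A.map (algebraMap ℝ ℂ)),
      μ ≠ 0 ∧ α * Real.pi / 2 < |Complex.arg μ|)
    (Q : ℝ → Matrix (Fin s) (Fin s) ℝ) (hQc : ContinuousOn Q (Set.Ici 0))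
    (hQdecay : Tendsto (fun t : ℝ => ‖Q t‖) atTop (𝓝 0))
    (g : ℝ → (Fin s → ℝ)) (hgc : ContinuousOn g (Set.Ici 0))
    (hgint : ∃ C : ℝ, ∀ t : ℝ, 0 ≤ t →
      t ^ (1 - α) * ∫ τ in (0:ℝ)..t,
        (t - τ) ^ (α - 1) * ‖(ML α α ((t - τ) ^ α • A)).mulVec (g τ)‖ ≤ C) :
    ∀ x₀ : Fin s → ℝ, ∃ φ : ℝ → (Fin s → ℝ),
      memC0inf α φ ∧
      (∀ t > (0:ℝ),
        φ t = t ^ (α - 1) • (ML α α (t ^ α • A)).mulVec x₀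
          + (∫ τ in (0:ℝ)..t, (t - τ) ^ (α - 1) •
              (ML α α ((t - τ) ^ α • A) * Q τ).mulVec (φ τ))
          + ∫ τ in (0:ℝ)..t, (t - τ) ^ (α - 1) •
              (ML α α ((t - τ) ^ α • A)).mulVec (g τ)) ∧
      (∀ ψ : ℝ → (Fin s → ℝ), memC0inf α ψ →
        (∀ t > (0:ℝ),
          ψ t = t ^ (α - 1) • (ML α α (t ^ α • A)).mulVec x₀
            + (∫ τ in (0:ℝ)..t, (t - τ) ^ (α - 1) •
                (ML α α ((t - τ) ^ α • A) * Q τ).mulVec (ψ τ))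
            + ∫ τ in (0:ℝ)..t, (t - τ) ^ (α - 1) •
                (ML α α ((t - τ) ^ α • A)).mulVec (g τ)) →
        ∀ t > (0:ℝ), ψ t = φ t) ∧
      Tendsto φ atTop (𝓝 0) := by
  intro x₀
  obtain ⟨C0, hC0, hE⟩ := E_bound s α hα0 hα1 A hspec
  have hm : Continuous fun t : ℝ => max t 0 := by fun_prop
  have hQ' : Continuous fun t : ℝ => Q (max t 0) :=
    hQc.comp_continuous hm fun t => Set.mem_Ici.2 (le_max_right t 0)
  have hg' : Continuous fun t : ℝ => g (max t 0) :=
    hgc.comp_continuous hm fun t => Set.mem_Ici.2 (le_max_right t 0)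
  have hcong : ∀ (t : ℝ), 0 ≤ t → ∀ {W : Type} [NormedAddCommGroup W] [NormedSpace ℝ W] (F G : ℝ → W),
      (∀ τ, 0 ≤ τ → F τ = G τ) → ∫ τ in (0:ℝ)..t, F τ = ∫ τ in (0:ℝ)..t, G τ := by
    intro t ht W _ _ F G hFG
    refine intervalIntegral.integral_congr fun τ hτ => ?_
    rw [Set.uIcc_of_le ht] at hτ
    exact hFG τ hτ.1
  have hRR : ∀ (χ : ℝ → Fin s → ℝ) (t : ℝ), 0 < t →
      RR α (fun r => cl s (ML α α (r ^ α • A))) (fun t => cl s (Q (max t 0)))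
        (fun t => g (max t 0)) x₀ χ t =
      t ^ (α - 1) • (ML α α (t ^ α • A)).mulVec x₀
          + (∫ τ in (0:ℝ)..t, (t - τ) ^ (α - 1) •
              (ML α α ((t - τ) ^ α • A) * Q τ).mulVec (χ τ))
          + ∫ τ in (0:ℝ)..t, (t - τ) ^ (α - 1) •
              (ML α α ((t - τ) ^ α • A)).mulVec (g τ) := by
    intro χ t ht
    unfold RR
    simp only [cl_apply, Matrix.mulVec_mulVec]
    congr 1
    · congr 1
      refine hcong t ht.le _ _ fun τ hτ => ?_
      rw [max_eq_left hτ]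
    · refine hcong t ht.le _ _ fun τ hτ => ?_
      rw [max_eq_left hτ]
  obtain ⟨φ, h1, h2, h3, h4⟩ := main_abs α hα0 hα1 (fun r => cl s (ML α α (r ^ α • A)))
    (fun t => cl s (Q (max t 0))) ((cl_cont s).comp (E_cont s α hα0 A)) ((cl_cont s).comp hQ')
    C0 hC0 (fun r hr => (cl_norm s _).trans (hE r hr))
    (by
      refine squeeze_zero' (Eventually.of_forall fun t => norm_nonneg _) ?_ hQdecay
      filter_upwards [eventually_ge_atTop 0] with t ht
      rw [max_eq_left ht]
      exact cl_norm s _)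
    (fun t => g (max t 0)) hg'
    (by
      obtain ⟨C, hC⟩ := hgint
      refine ⟨C, fun t ht => ?_⟩
      refine le_of_eq_of_le ?_ (hC t ht)
      congr 1
      refine hcong t ht _ _ fun τ hτ => ?_
      rw [max_eq_left hτ, cl_apply])
    x₀
  refine ⟨φ, h1, fun t ht => ?_, fun ψ hψ hψe => h3 ψ hψ fun t ht => ?_, h4⟩
  · rw [← hRR φ t ht]; exact h2 t ht
  · rw [hRR ψ t ht]; exact hψe t ht
end

section
/- Let 0 < α < 1 and let A be any real s×s matrix. Then lim_{t→0⁺} t^{α-1} ‖E_{α,α}(t^α A)‖ = ∞ (the function tends to +∞ as t → 0⁺). Consequently, there exist no constants M, γ > 0 such that ‖t^{α-1} E_{α,α}(t^α A)‖ ≤ M e^{-γ t} for all t ∈ (0,∞). -/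
open Filter Topology MeasureTheory

attribute [local instance] Matrix.linftyOpNormedAddCommGroup Matrix.linftyOpNormedRing

lemma gam_inv_le (x : ℝ) (hx : 0 < x) : |(Real.Gamma x)⁻¹| ≤ 6 := by
  have h2 : ∀ y : ℝ, 2 ≤ y → 1 ≤ Real.Gamma y := by
    intro y hy
    have := Real.Gamma_strictMonoOn_Ici.monotoneOn (Set.mem_Ici.2 le_rfl) (Set.mem_Ici.2 hy) hy
    rwa [Real.Gamma_two] at this
  have hp := Real.Gamma_pos_of_pos hx
  rw [abs_of_pos (inv_pos.2 hp)]
  apply inv_le_of_inv_le₀ (by norm_num)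
  rcases le_total 2 x with h | h
  · linarith [h2 x h, show (6:ℝ)⁻¹ ≤ 1 by norm_num]
  · have h3 := h2 (x + 1 + 1) (by linarith)
    rw [Real.Gamma_add_one (by linarith), Real.Gamma_add_one hx.ne'] at h3
    have : (x + 1) * x ≤ 6 := by nlinarith
    have h4 : (x + 1) * (x * Real.Gamma x) ≤ 6 * Real.Gamma x := by
      rw [← mul_assoc]; exact mul_le_mul_of_nonneg_right this hp.le
    linarith

lemma ML_tendsto (α : ℝ) (hα0 : 0 < α) (s : ℕ)
    (A : Matrix (Fin s) (Fin s) ℝ) :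
    Tendsto (fun t : ℝ => ML α α (t ^ α • A)) (𝓝[>] 0) (𝓝 ((Real.Gamma α)⁻¹ • 1)) := by
  letI : NormedSpace ℝ (Matrix (Fin s) (Fin s) ℝ) := Matrix.linftyOpNormedSpace
  have h0 : Tendsto (fun t : ℝ => t ^ α • A) (𝓝[>] 0) (𝓝 0) := by
    have h : Tendsto (fun t : ℝ => t ^ α) (𝓝[>] 0) (𝓝 0) := by
      have := (Real.continuousAt_rpow_const 0 α (Or.inr hα0.le)).tendsto
      rw [Real.zero_rpow hα0.ne'] at this
      exact this.mono_left nhdsWithin_le_nhds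
    simpa using h.smul_const A
  have hs : (Real.Gamma α)⁻¹ • (1 : Matrix (Fin s) (Fin s) ℝ)
      = ∑' k : ℕ, (Real.Gamma (α * k + α))⁻¹ • (0 : Matrix (Fin s) (Fin s) ℝ) ^ k := by
    rw [tsum_eq_single 0]
    · simp
    · intro k hk
      simp [hk]
  rw [hs]
  unfold ML
  refine tendsto_tsum_of_dominated_convergence
    (bound := fun k : ℕ => 6 * ((1 / 2 : ℝ) ^ k * (1 + ‖(1 : Matrix (Fin s) (Fin s) ℝ)‖))) ?_ ?_ ?_
  · exact ((summable_geometric_two).mul_right _).mul_left _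
  · intro k
    exact (h0.pow k).const_smul _
  · have hn : Tendsto (fun t : ℝ => ‖t ^ α • A‖) (𝓝[>] 0) (𝓝 0) := by
      simpa using h0.norm
    filter_upwards [hn.eventually_le_const (show (0:ℝ) < 1 / 2 by norm_num)] with t ht k
    rw [norm_smul, Real.norm_eq_abs]
    refine mul_le_mul (gam_inv_le _ (by positivity)) ?_ (norm_nonneg _) (by norm_num)
    have h1 := norm_nonneg (1 : Matrix (Fin s) (Fin s) ℝ)
    rcases Nat.eq_zero_or_pos k with rfl | hk
    · simp
    · calc _ ≤ ‖t ^ α • A‖ ^ k := norm_pow_le' _ hk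
        _ ≤ (1 / 2) ^ k := by gcongr
        _ ≤ _ := le_mul_of_one_le_right (by positivity) (by linarith)

theorem stmt14 (α : ℝ) (hα0 : 0 < α) (hα1 : α < 1) (s : ℕ) (hs : 1 ≤ s)
    (A : Matrix (Fin s) (Fin s) ℝ) :
    Tendsto (fun t : ℝ => t ^ (α - 1) * ‖ML α α (t ^ α • A)‖) (𝓝[>] 0) atTop ∧
    ¬ ∃ M γ : ℝ, 0 < M ∧ 0 < γ ∧ ∀ t > (0:ℝ),
        t ^ (α - 1) * ‖ML α α (t ^ α • A)‖ ≤ M * Real.exp (-(γ * t)) := by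
  have hT : Tendsto (fun t : ℝ => t ^ (α - 1) * ‖ML α α (t ^ α • A)‖) (𝓝[>] 0) atTop := by
    have h := (ML_tendsto α hα0 s A).norm
    have hpos : 0 < ‖(Real.Gamma α)⁻¹ • (1 : Matrix (Fin s) (Fin s) ℝ)‖ := by
      rw [norm_pos_iff]
      intro h
      have := congrFun (congrFun h ⟨0, hs⟩) ⟨0, hs⟩
      simp [(Real.Gamma_pos_of_pos hα0).ne'] at this
    exact (tendsto_rpow_neg_nhdsGT_zero (by linarith)).atTop_mul_pos hpos h
  refine ⟨hT, ?_⟩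
  rintro ⟨M, γ, hM, hγ, h⟩
  obtain ⟨t, ht, ht0⟩ := ((hT.eventually_gt_atTop M).and self_mem_nhdsWithin).exists
  have ht0 : 0 < t := ht0
  have h1 := h t ht0
  have : Real.exp (-(γ * t)) ≤ 1 := Real.exp_le_one_iff.2 (by nlinarith)
  nlinarith
end
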